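/- Let p be a prime and n ≥ 1, and let M be an analytic submanifold of ℚ_p^n. If some point of M is not very well multiplicatively approximable, then almost every point in a neighbourhood of that point in M (with respect to the smooth measure class on M) is not very well multiplicatively approximable. -/

import Mathlib

open MeasureTheory Metric
open scoped ENNReal NNReal

namespace PadicDioph

variable (p : ℕ) [Fact p.Prime]

noncomputable instance : MeasurableSpace ℚ_[p] := borel _
instance : BorelSpace ℚ_[p] := ⟨rfl⟩

/-- Membership in `ℤ[1/p]`, viewed inside `ℚ`. -/
def IsZInvP (q : ℚ) : Prop := ∃ (z : ℤ) (k : ℕ), q = (z : ℚ) / (p : ℚ) ^ k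

/-- Sup norm (max of archimedean absolute values) of a finite tuple of rationals. -/
noncomputable def supNormR {m : ℕ} (q : Fin m → ℚ) : ℝ := ⨆ i, |(q i : ℝ)|

/-- Sup of the `p`-adic absolute values of a finite tuple of rationals. -/
noncomputable def supNormP {m : ℕ} (q : Fin m → ℚ) : ℝ := ⨆ i, ‖((q i : ℚ_[p]))‖

/-- Sup norm of an integer tuple together with an extra integer coordinate. -/
noncomputable def supNormZ {n : ℕ} (q0 : ℤ) (q : Fin n → ℤ) : ℝ :=
  max |(q0 : ℝ)| (⨆ i, |((q i : ℤ) : ℝ)|)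

/-- The classical Diophantine exponent `w(y)` of `y ∈ ℚ_p^n`: the supremum of all `v > 0`
such that `|q₀ + q·y|_p ≤ ‖(q₀,q)‖_∞^{-v}` has infinitely many integer solutions. -/
noncomputable def wExp {n : ℕ} (y : Fin n → ℚ_[p]) : ℝ≥0∞ :=
  ⨆ (v : ℝ) (_ : 0 < v ∧
    {qq : ℤ × (Fin n → ℤ) |
      ‖((qq.1 : ℚ_[p]) + ∑ i, (qq.2 i : ℚ_[p]) * y i)‖ ≤
        (supNormZ qq.1 qq.2) ^ (-v)}.Infinite), ENNReal.ofReal v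

/-- `y` is very well approximable if `w(y) > n + 1`. -/
def IsVWA {n : ℕ} (y : Fin n → ℚ_[p]) : Prop :=
  ENNReal.ofReal ((n : ℝ) + 1) < wExp p y

/-- The defining condition of the exponent `w_p`: there are solutions
`q̃ = (q₀, q) ∈ ℤ[1/p]^{n+1}` of `|q·y + q₀|_p < (‖q‖_p ‖q̃‖_∞)^{-v} ‖q̃‖_∞^{-1}`
with `‖q‖_p ‖q̃‖_∞` arbitrarily large. -/
def WpCond {n : ℕ} (y : Fin n → ℚ_[p]) (v : ℝ) : Prop :=
  ∀ T : ℝ, ∃ (q0 : ℚ) (q : Fin n → ℚ),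
    IsZInvP p q0 ∧ (∀ i, IsZInvP p (q i)) ∧
    T < supNormP p q * supNormR (Fin.cons q0 q) ∧
    ‖(∑ i, (q i : ℚ_[p]) * y i) + (q0 : ℚ_[p])‖ <
      (supNormP p q * supNormR (Fin.cons q0 q)) ^ (-v) * (supNormR (Fin.cons q0 q))⁻¹

/-- The exponent `w_p(y)`. -/
noncomputable def wpExp {n : ℕ} (y : Fin n → ℚ_[p]) : ℝ≥0∞ :=
  ⨆ (v : ℝ) (_ : 0 < v ∧ WpCond p y v), ENNReal.ofReal v

/-- `Π_+` of a tuple of rationals: the product of `|q_i|_∞` over the nonzero coordinates. -/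
noncomputable def piPlusQ {m : ℕ} (q : Fin m → ℚ) : ℝ :=
  ∏ i, (if q i = 0 then 1 else |(q i : ℝ)|)

/-- `Π_+` of `(q₀, q)` with integer coordinates. -/
noncomputable def piPlusZ {n : ℕ} (q0 : ℤ) (q : Fin n → ℤ) : ℝ :=
  (if q0 = 0 then 1 else |(q0 : ℝ)|) * ∏ i, (if q i = 0 then 1 else |((q i : ℤ) : ℝ)|)

/-- `y ∈ ℚ_p^n` is very well multiplicatively approximable. -/
def IsVWMA {n : ℕ} (y : Fin n → ℚ_[p]) : Prop :=
  ∃ ε : ℝ, 0 < ε ∧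
    {qq : ℤ × (Fin n → ℤ) |
      ‖((qq.1 : ℚ_[p]) + ∑ i, (qq.2 i : ℚ_[p]) * y i)‖ ≤
        (piPlusZ qq.1 qq.2) ^ (-(1 + ε))}.Infinite

/-- A measure on `ℚ_p^n` is strongly extremal if almost every point is not VWMA. -/
def StronglyExtremal {n : ℕ} (μ : Measure (Fin n → ℚ_[p])) : Prop :=
  ∀ᵐ y ∂μ, ¬ IsVWMA p y

/-- `δ(g_t u_y D^{n+1})` for the one-parameter flow: `g_t` has `p`-adic component
`diag(p^{-t},1,…,1)` and archimedean component `p^{-t/(n+1)}·Id`. -/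
noncomputable def deltaOne {n : ℕ} (y : Fin n → ℚ_[p]) (t : ℕ) : ℝ :=
  sInf { c : ℝ | ∃ qt : Fin (n + 1) → ℚ, (∀ i, IsZInvP p (qt i)) ∧ qt ≠ 0 ∧
    c = ((p : ℝ) ^ (-(t : ℝ) / ((n : ℝ) + 1)) * supNormR qt) *
        max (‖(((p : ℚ_[p]) ^ t)⁻¹ * ((qt 0 : ℚ_[p]) + ∑ i : Fin n, (qt i.succ : ℚ_[p]) * y i))‖)
            (⨆ i : Fin n, ‖((qt i.succ : ℚ_[p]))‖) }

/-- The exponent `γ(y)`. -/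
noncomputable def gammaExp {n : ℕ} (y : Fin n → ℚ_[p]) : ℝ :=
  sSup {c : ℝ | 0 ≤ c ∧ ∀ N : ℕ, ∃ t : ℕ, N ≤ t ∧
    deltaOne p y t ≤ (p : ℝ) ^ (-(c * (t : ℝ)))}

/-- `δ(g_t u_y D^{n+1})` for the multiparameter flow: for `t = (t₀,…,t_n)` with
`T = Σ tᵢ`, the `p`-adic component of `g_t` is `diag(p^{-T},1,…,1)` and the archimedean
component is `diag(p^{-t₀},…,p^{-t_n})`. -/
noncomputable def deltaMulti {n : ℕ} (y : Fin n → ℚ_[p]) (t : Fin (n + 1) → ℕ) : ℝ :=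
  sInf { c : ℝ | ∃ qt : Fin (n + 1) → ℚ, (∀ i, IsZInvP p (qt i)) ∧ qt ≠ 0 ∧
    c = (⨆ i, (p : ℝ) ^ (-((t i : ℝ))) * |(qt i : ℝ)|) *
        max (‖(((p : ℚ_[p]) ^ (∑ i, t i))⁻¹ *
              ((qt 0 : ℚ_[p]) + ∑ i : Fin n, (qt i.succ : ℚ_[p]) * y i))‖)
            (⨆ i : Fin n, ‖((qt i.succ : ℚ_[p]))‖) }

/-- The support of a measure on a metric space. -/
def measSupp {X : Type*} [MetricSpace X] [MeasurableSpace X] (μ : Measure X) : Set X :=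
  {x | ∀ r : ℝ, 0 < r → 0 < μ (ball x r)}

/-- `‖f‖_{μ,B}`. -/
noncomputable def muSupNorm {X : Type*} [MetricSpace X] [MeasurableSpace X]
    (μ : Measure X) (B : Set X) (f : X → ℚ_[p]) : ℝ :=
  sSup {c : ℝ | 0 < μ {x ∈ B | c < ‖f x‖}}

/-- `f` is `(C, α)`-good on `V` with respect to `μ`. -/
def IsGoodOn {X : Type*} [MetricSpace X] [MeasurableSpace X] (μ : Measure X)
    (C a : ℝ) (V : Set X) (f : X → ℚ_[p]) : Prop :=
  ∀ (x₀ : X) (r : ℝ), 0 < r → x₀ ∈ measSupp μ → ball x₀ r ⊆ V →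
    ∀ ε : ℝ, 0 < ε →
      μ {x ∈ ball x₀ r | ‖f x‖ < ε} ≤
        ENNReal.ofReal (C * (ε / muSupNorm p μ (ball x₀ r) f) ^ a) * μ (ball x₀ r)

/-- A metric space is Besicovitch: any family of balls whose centers exhaust a bounded
set `A` admits a countable subfamily covering `A` with multiplicity at most `N`. -/
def IsBesicovitch (X : Type*) [MetricSpace X] : Prop :=
  ∃ N : ℕ, ∀ (A : Set X), Bornology.IsBounded A →
    ∀ F : Set (X × ℝ), (∀ b ∈ F, 0 < b.2) → (∀ x ∈ A, ∃ r : ℝ, (x, r) ∈ F) →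
      ∃ S ⊆ F, S.Countable ∧ (∀ x ∈ A, ∃ b ∈ S, x ∈ ball b.1 b.2) ∧
        ∀ x : X, {b ∈ S | x ∈ ball b.1 b.2}.encard ≤ N

/-- `μ` is `D`-Federer on the open set `U`. -/
def IsDFedererOn {X : Type*} [MetricSpace X] [MeasurableSpace X]
    (μ : Measure X) (D : ℝ) (U : Set X) : Prop :=
  ∀ x ∈ measSupp μ, ∀ r : ℝ, 0 < r → ball x (3 * r) ⊆ U →
    μ (ball x (3 * r)) ≤ ENNReal.ofReal D * μ (ball x r)

/-- `μ` is Federer. -/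
def IsFederer {X : Type*} [MetricSpace X] [MeasurableSpace X] (μ : Measure X) : Prop :=
  ∀ᵐ x ∂μ, ∃ U : Set X, IsOpen U ∧ x ∈ U ∧ 0 < μ U ∧ ∃ D : ℝ, 0 < D ∧ IsDFedererOn μ D U

/-- The pair `(f, μ)` is good: `μ`-a.e. point has a neighbourhood `V` and `C, α > 0`
such that every affine combination `c₀ + Σ cᵢ fᵢ` is `(C, α)`-good on `V` w.r.t. `μ`. -/
def GoodPair {X : Type*} [MetricSpace X] [MeasurableSpace X] {n : ℕ}
    (f : X → (Fin n → ℚ_[p])) (μ : Measure X) : Prop :=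
  ∀ᵐ x ∂μ, ∃ V : Set X, IsOpen V ∧ x ∈ V ∧ ∃ C a : ℝ, 0 < C ∧ 0 < a ∧
    ∀ c0 : ℚ_[p], ∀ c : Fin n → ℚ_[p],
      IsGoodOn p μ C a V (fun x => c0 + ∑ i, c i * f x i)

/-- `(f, μ)` is nonplanar in the affine subspace `L`. -/
def NonplanarIn {X : Type*} [MetricSpace X] [MeasurableSpace X] {n : ℕ}
    (f : X → (Fin n → ℚ_[p])) (μ : Measure X)
    (L : AffineSubspace ℚ_[p] (Fin n → ℚ_[p])) : Prop :=
  ∀ B : Set X, IsOpen B → B.Nonempty → 0 < μ B →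
    affineSpan ℚ_[p] (f '' (B ∩ measSupp μ)) = L

/-- `f` is nondegenerate in the affine subspace `L` at `x`: `f` takes values in `L` and the
span of the partial derivatives of `f` at `x` up to some order is the linear part of `L`. -/
def NondegenerateAt {d n : ℕ} (f : (Fin d → ℚ_[p]) → (Fin n → ℚ_[p]))
    (L : AffineSubspace ℚ_[p] (Fin n → ℚ_[p])) (x : Fin d → ℚ_[p]) : Prop :=
  (∀ u, f u ∈ L) ∧ ∃ m : ℕ,
    Submodule.span ℚ_[p]
      {v : Fin n → ℚ_[p] | ∃ j : ℕ, j ≤ m ∧ 1 ≤ j ∧ ∃ vs : Fin j → (Fin d → ℚ_[p]),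
        v = iteratedFDeriv ℚ_[p] j f x vs} = L.direction

/-- An analytic chart of the `d`-dimensional submanifold `M` of `ℚ_p^n`: an analytic map
`f` on an open set `U`, injective on `U`, immersive, a homeomorphism onto its image, whose
image is a relatively open subset of `M`. -/
def IsChart (d n : ℕ) (M : Set (Fin n → ℚ_[p]))
    (U : Set (Fin d → ℚ_[p])) (f : (Fin d → ℚ_[p]) → (Fin n → ℚ_[p])) : Prop :=
  IsOpen U ∧ AnalyticOnNhd ℚ_[p] f U ∧ Set.InjOn f U ∧
  (∀ x ∈ U, Function.Injective (fderiv ℚ_[p] f x)) ∧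
  (∀ x ∈ U, ∀ V : Set (Fin d → ℚ_[p]), IsOpen V → x ∈ V →
      ∃ W : Set (Fin n → ℚ_[p]), IsOpen W ∧ f x ∈ W ∧ W ∩ f '' U ⊆ f '' (V ∩ U)) ∧
  ∃ W : Set (Fin n → ℚ_[p]), IsOpen W ∧ M ∩ W = f '' U

/-- `M` is a `d`-dimensional analytic submanifold of `ℚ_p^n`. -/
def IsAnalyticSubmanifold (d n : ℕ) (M : Set (Fin n → ℚ_[p])) : Prop :=
  M.Nonempty ∧ ∀ y ∈ M, ∃ (U : Set (Fin d → ℚ_[p])) (f : (Fin d → ℚ_[p]) → (Fin n → ℚ_[p])),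
    IsChart p d n M U f ∧ y ∈ f '' U

/-!
By the Dani correspondence, a point is very well multiplicatively approximable if and only if for
some `γ > 0` there are infinitely many multi-times `t`, of total time `T = Σ t`, at which the
lattice attached to the point, moved by the diagonal flow, has a nonzero vector of size `p^{-γT}`.

Suppose that `f x₀` is not very well multiplicatively approximable, and fix `g > 0`. For large `T`
the nonzero vectors of the moved lattice at `x₀` all have size more than `p^{-γT}`, with `γ` small
compared to `g`, so by Minkowski's theorem the sublattices cut out by rational subspaces have
covolumes that are not small either. As functions of `x`, these covolumes are maxima of constants
and of norms of linear forms in `f x`. An analytic function is nearly equal to its Lagrange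
interpolation polynomial at `K` nodes of a ball around `x₀`, and `K` can be chosen uniformly because
the linear forms make up a finite-dimensional space; hence such a function cannot be small at `K`
well-separated points of a ball unless it is small on the whole ball. This is the `(C, 1/K)`-good
property.

The Kleinbock–Margulis covering argument over flags of rational subspaces now shows that, near
`x₀`, the points at which the lattice at time `t` has a nonzero vector of size `p^{-gT}` form a set
of measure `O(r^T)` with `r < 1`. Since `Σ_t r^{Σ t}` converges, the Borel–Cantelli lemma applies.
-/

variable {p}

section Interpolation

open Polynomial Lagrange

variable {V W : Type*}

open Classical in
/-- The weight of the node `s` in Lagrange interpolation at `t₀` from the nodes `S`. The nodes are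
`p`-adic integers, so that divided differences of integral polynomials stay integral. -/
noncomputable def lagrangeWeight (S : Finset ℤ_[p]) (t₀ s : ℤ_[p]) : ℚ_[p] :=
  (Lagrange.basis S (fun s : ℤ_[p] => (s : ℚ_[p])) s).eval (t₀ : ℚ_[p])

lemma norm_lagrangeWeight_le {S : Finset ℤ_[p]} {r : ℝ} (hr : 0 < r)
    (hS : (S : Set ℤ_[p]).Pairwise fun s t => r ≤ ‖s - t‖) (t₀ : ℤ_[p]) {s : ℤ_[p]} (hs : s ∈ S) :
    ‖lagrangeWeight S t₀ s‖ ≤ r⁻¹ ^ (S.card - 1) := by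
  classical
  rw [lagrangeWeight, Lagrange.basis, eval_prod, norm_prod, ← Finset.card_erase_of_mem hs,
    ← Finset.prod_const]
  refine Finset.prod_le_prod (fun _ _ => norm_nonneg _) fun t ht => ?_
  obtain ⟨hts, htS⟩ := Finset.mem_erase.1 ht
  have hsep : ‖((s : ℚ_[p]) - t)⁻¹‖ ≤ r⁻¹ := by
    rw [norm_inv, ← PadicInt.coe_sub]
    exact inv_anti₀ hr (hS hs htS hts.symm)
  have hle : ‖(t₀ : ℚ_[p]) - t‖ ≤ 1 := by
    rw [← PadicInt.coe_sub]
    exact PadicInt.norm_le_one _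
  simpa only [basisDivisor, eval_mul, eval_C, eval_sub, eval_X, norm_mul, mul_one] using
    mul_le_mul hsep hle (norm_nonneg _) (inv_nonneg.2 hr.le)

section Module

variable [AddCommGroup V] [Module ℚ_[p] V] [AddCommGroup W] [Module ℚ_[p] W]

/-- The error at `t₀` of the Lagrange interpolation of `φ` at the nodes `S`. -/
noncomputable def interpError (S : Finset ℤ_[p]) (t₀ : ℤ_[p]) (φ : ℚ_[p] → V) : V :=
  φ t₀ - ∑ s ∈ S, lagrangeWeight S t₀ s • φ s

lemma interpError_map (S : Finset ℤ_[p]) (t₀ : ℤ_[p]) (ℓ : V →ₗ[ℚ_[p]] W) (φ : ℚ_[p] → V) :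
    interpError S t₀ (fun t => ℓ (φ t)) = ℓ (interpError S t₀ φ) := by
  simp only [interpError, map_sub, map_sum, map_smul]

lemma interpError_finsetSum {ι : Type*} (S : Finset ℤ_[p]) (t₀ : ℤ_[p]) (A : Finset ι)
    (φ : ι → ℚ_[p] → V) :
    interpError S t₀ (fun t => ∑ i ∈ A, φ i t) = ∑ i ∈ A, interpError S t₀ (φ i) := by
  simp only [interpError, Finset.smul_sum, Finset.sum_sub_distrib]
  rw [Finset.sum_comm]

lemma interpError_smul_const (S : Finset ℤ_[p]) (t₀ : ℤ_[p]) (φ : ℚ_[p] → ℚ_[p]) (v : V) :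
    interpError S t₀ (fun t => φ t • v) = interpError S t₀ φ • v :=
  interpError_map S t₀ (LinearMap.toSpanSingleton ℚ_[p] V v) φ

end Module

lemma interpError_eval_map (S : Finset ℤ_[p]) (t₀ : ℤ_[p]) (P : ℤ_[p][X]) :
    interpError S t₀ (fun t => (P.map PadicInt.Coe.ringHom).eval t) =
      (((P /ₘ nodal S id).eval t₀ * ∏ s ∈ S, (t₀ - s) : ℤ_[p]) : ℚ_[p]) := by
  classical
  have hcoe (x : ℤ_[p]) (Q : ℤ_[p][X]) :
      (Q.map PadicInt.Coe.ringHom).eval (x : ℚ_[p]) = ((Q.eval x : ℤ_[p]) : ℚ_[p]) :=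
    eval_map_apply PadicInt.Coe.ringHom x
  have hmonic : (nodal S id : ℤ_[p][X]).Monic := nodal_monic
  have hdivision (x : ℤ_[p]) :
      P.eval x = (P %ₘ nodal S id).eval x + (∏ s ∈ S, (x - s)) * (P /ₘ nodal S id).eval x := by
    conv_lhs => rw [← modByMonic_add_div P (nodal S id), eval_add, eval_mul, eval_nodal]
    rfl
  have hnode {s : ℤ_[p]} (hs : s ∈ S) : P.eval s = (P %ₘ nodal S id).eval s := by
    rw [hdivision, Finset.prod_eq_zero hs (sub_self s), zero_mul, add_zero]
  have hremainder : (((P %ₘ nodal S id).eval t₀ : ℤ_[p]) : ℚ_[p]) =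
      ∑ s ∈ S, lagrangeWeight S t₀ s * (((P %ₘ nodal S id).eval s : ℤ_[p]) : ℚ_[p]) := by
    have hdegree : ((P %ₘ nodal S id).map PadicInt.Coe.ringHom).degree < S.card :=
      degree_map_le.trans_lt ((degree_modByMonic_lt P hmonic).trans_eq degree_nodal)
    have := congrArg (eval (t₀ : ℚ_[p]))
      (eq_interpolate (v := fun s : ℤ_[p] => (s : ℚ_[p])) Subtype.coe_injective.injOn hdegree)
    simpa only [hcoe, interpolate_apply, eval_finsetSum, eval_mul, eval_C, lagrangeWeight,
      mul_comm] using this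
  simp only [interpError, hcoe, smul_eq_mul]
  rw [Finset.sum_congr rfl fun s hs => by rw [hnode hs], ← hremainder, hdivision t₀]
  push_cast
  ring

lemma interpError_pow (S : Finset ℤ_[p]) (t₀ : ℤ_[p]) (j : ℕ) :
    interpError S t₀ (fun t => t ^ j) =
      ((((X : ℤ_[p][X]) ^ j /ₘ nodal S id).eval t₀ * ∏ s ∈ S, (t₀ - s) : ℤ_[p]) : ℚ_[p]) := by
  rw [← interpError_eval_map]
  simp only [Polynomial.map_pow, map_X, eval_pow, eval_X]

lemma interpError_pow_eq_zero {S : Finset ℤ_[p]} {j : ℕ} (hj : j < S.card) (t₀ : ℤ_[p]) :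
    interpError S t₀ (fun t => t ^ j) = 0 := by
  have hquotient : (X : ℤ_[p][X]) ^ j /ₘ nodal S id = 0 := by
    rw [divByMonic_eq_zero_iff nodal_monic, degree_nodal, degree_X_pow]
    exact_mod_cast hj
  simp only [interpError_pow, hquotient, eval_zero, zero_mul, PadicInt.coe_zero]

lemma norm_interpError_pow_le_one (S : Finset ℤ_[p]) (t₀ : ℤ_[p]) (j : ℕ) :
    ‖interpError S t₀ (fun t => t ^ j)‖ ≤ 1 := by
  rw [interpError_pow]
  exact PadicInt.norm_le_one _

section Normed

variable [NormedAddCommGroup V] [NormedSpace ℚ_[p] V] [IsUltrametricDist V]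

lemma norm_le_max_interpError {S : Finset ℤ_[p]} {r τ : ℝ} (hr : 0 < r) (hτ : 0 ≤ τ)
    (hS : (S : Set ℤ_[p]).Pairwise fun s t => r ≤ ‖s - t‖) {φ : ℚ_[p] → V}
    (hφ : ∀ s ∈ S, ‖φ s‖ ≤ τ) (t₀ : ℤ_[p]) :
    ‖φ t₀‖ ≤ max ‖interpError S t₀ φ‖ (r⁻¹ ^ (S.card - 1) * τ) := by
  have hsum : ‖∑ s ∈ S, lagrangeWeight S t₀ s • φ s‖ ≤ r⁻¹ ^ (S.card - 1) * τ := by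
    refine IsUltrametricDist.norm_sum_le_of_forall_le_of_nonneg (by positivity) fun s hs => ?_
    rw [norm_smul]
    exact mul_le_mul (norm_lagrangeWeight_le hr hS t₀ hs) (hφ s hs) (norm_nonneg _) (by positivity)
  calc ‖φ t₀‖ = ‖interpError S t₀ φ + ∑ s ∈ S, lagrangeWeight S t₀ s • φ s‖ := by
        rw [interpError, sub_add_cancel]
    _ ≤ _ := (IsUltrametricDist.norm_add_le_max _ _).trans (max_le_max_left _ hsum)

end Normed

section Analytic

variable {E : Type*} [NormedAddCommGroup E] [NormedSpace ℚ_[p] E]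
variable [NormedAddCommGroup V] [NormedSpace ℚ_[p] V]

lemma multilinear_line_eq_sum {k : ℕ}
    (F : ContinuousMultilinearMap ℚ_[p] (fun _ : Fin k => E) V) (z u : E) (t : ℚ_[p]) :
    F (fun _ => z + t • u) =
      ∑ A : Finset (Fin k), t ^ A.card • F (A.piecewise (fun _ => u) fun _ => z) := by
  have hline : (fun _ : Fin k => z + t • u) = (fun _ => t • u) + fun _ => z :=
    funext fun _ => add_comm _ _
  rw [hline]
  refine (F.toMultilinearMap.map_add_univ _ _).trans (Finset.sum_congr rfl fun A _ => ?_)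
  have hsmul := F.toMultilinearMap.map_piecewise_smul (fun _ => t)
    (A.piecewise (fun _ => u) fun _ => z) A
  rw [Finset.prod_const] at hsmul
  refine Eq.trans (congrArg F ?_) hsmul
  funext i
  by_cases hi : i ∈ A
  · simp only [Finset.piecewise_eq_of_mem _ _ _ hi]
  · simp only [Finset.piecewise_eq_of_notMem _ _ _ hi]

lemma norm_multilinear_piecewise_le {k : ℕ}
    (F : ContinuousMultilinearMap ℚ_[p] (fun _ : Fin k => E) V) {R : ℝ} (hR : 0 < R) {z : E}
    (hz : ‖z‖ ≤ R) (u : E) (A : Finset (Fin k)) :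
    ‖F (A.piecewise (fun _ => u) fun _ => z)‖ ≤ ‖F‖ * R ^ k * (‖u‖ / R) ^ A.card := by
  have hcoord (i : Fin k) :
      ‖A.piecewise (fun _ => u) (fun _ => z) i‖ ≤ A.piecewise (fun _ => ‖u‖) (fun _ => R) i := by
    by_cases hi : i ∈ A
    · simp only [Finset.piecewise_eq_of_mem _ _ _ hi, le_refl]
    · simpa only [Finset.piecewise_eq_of_notMem _ _ _ hi] using hz
  have hprod : ∏ i, A.piecewise (fun _ => ‖u‖) (fun _ => R) i =
      ‖u‖ ^ A.card * R ^ (k - A.card) := by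
    simp [Finset.prod_piecewise, Finset.card_sdiff]
  have hcard : A.card ≤ k := by simpa using Finset.card_le_univ A
  calc ‖F (A.piecewise (fun _ => u) fun _ => z)‖
      ≤ ‖F‖ * ∏ i, A.piecewise (fun _ => ‖u‖) (fun _ => R) i :=
        F.le_opNorm_mul_prod_of_le hcoord
    _ = ‖F‖ * R ^ k * (‖u‖ / R) ^ A.card := by
        rw [hprod, ← pow_sub_mul_pow R hcard, div_pow]
        field_simp

variable [IsUltrametricDist V]

lemma norm_interpError_multilinear_le (S : Finset ℤ_[p]) (t₀ : ℤ_[p]) {k : ℕ}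
    (F : ContinuousMultilinearMap ℚ_[p] (fun _ : Fin k => E) V) {R : ℝ} (hR : 0 < R) {z u : E}
    (hz : ‖z‖ ≤ R) (hu : ‖u‖ ≤ R) :
    ‖interpError S t₀ (fun t => F fun _ => z + t • u)‖ ≤ ‖F‖ * R ^ k * (‖u‖ / R) ^ S.card := by
  simp only [multilinear_line_eq_sum, interpError_finsetSum, interpError_smul_const]
  refine IsUltrametricDist.norm_sum_le_of_forall_le_of_nonneg (by positivity) fun A _ => ?_
  rcases lt_or_ge A.card S.card with hA | hA
  · rw [interpError_pow_eq_zero hA, zero_smul, norm_zero]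
    positivity
  · rw [norm_smul]
    calc _ ≤ 1 * (‖F‖ * R ^ k * (‖u‖ / R) ^ A.card) :=
          mul_le_mul (norm_interpError_pow_le_one S t₀ _)
            (norm_multilinear_piecewise_le F hR hz u A) (norm_nonneg _) zero_le_one
      _ ≤ ‖F‖ * R ^ k * (‖u‖ / R) ^ S.card := by
          rw [one_mul]
          exact mul_le_mul_of_nonneg_left
            (pow_le_pow_of_le_one (by positivity) ((div_le_one hR).2 hu) hA) (by positivity)

variable [IsUltrametricDist E]

lemma norm_add_padicInt_smul_le {R : ℝ} {z u : E} (hz : ‖z‖ ≤ R) (hu : ‖u‖ ≤ R) (t : ℤ_[p]) :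
    ‖z + (t : ℚ_[p]) • u‖ ≤ R := by
  refine (IsUltrametricDist.norm_add_le_max _ _).trans (max_le hz ?_)
  rw [norm_smul]
  exact (mul_le_of_le_one_left (norm_nonneg u) (PadicInt.norm_le_one t)).trans hu

theorem norm_interpError_le_of_hasFPowerSeriesOnBall {f : E → V}
    {F : FormalMultilinearSeries ℚ_[p] E V} {x₀ : E} {r : ℝ≥0∞}
    (hf : HasFPowerSeriesOnBall f F x₀ r) {R M : ℝ} (hR : 0 < R) (hRr : ENNReal.ofReal R < r)
    (hM : ∀ k, ‖F k‖ * R ^ k ≤ M) (S : Finset ℤ_[p]) (t₀ : ℤ_[p]) {x u : E}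
    (hx : x ∈ closedBall x₀ R) (hu : ‖u‖ ≤ R) :
    ‖interpError S t₀ (fun t => f (x + t • u))‖ ≤ M * (‖u‖ / R) ^ S.card := by
  have hz : ‖x - x₀‖ ≤ R := mem_closedBall_iff_norm.1 hx
  have hM0 : 0 ≤ M := (by positivity : 0 ≤ ‖F 0‖ * R ^ 0).trans (hM 0)
  have hseries (t : ℤ_[p]) : HasSum (fun k => F k fun _ => x - x₀ + (t : ℚ_[p]) • u)
      (f (x + (t : ℚ_[p]) • u)) := by
    have hmem : x - x₀ + (t : ℚ_[p]) • u ∈ Metric.eball (0 : E) r := by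
      rw [mem_eball, edist_zero_right, ← ofReal_norm]
      exact (ENNReal.ofReal_le_ofReal (norm_add_padicInt_smul_le hz hu t)).trans_lt hRr
    convert hf.hasSum hmem using 2
    abel
  have herror : HasSum (fun k => interpError S t₀ fun t => F k fun _ => x - x₀ + t • u)
      (interpError S t₀ fun t => f (x + t • u)) :=
    (hseries t₀).sub (hasSum_sum fun s _ => (hseries s).const_smul _)
  have hmem := isClosed_closedBall.mem_of_tendsto herror <| Filter.Eventually.of_forall fun A => by
    rw [mem_closedBall_zero_iff]
    exact IsUltrametricDist.norm_sum_le_of_forall_le_of_nonneg (by positivity) fun k _ =>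
      (norm_interpError_multilinear_le S t₀ (F k) hR hz hu).trans
        (mul_le_mul_of_nonneg_right (hM k) (by positivity))
  exact mem_closedBall_zero_iff.1 hmem

theorem exists_norm_interpError_le_of_analyticAt {f : E → V} {x₀ : E} (hf : AnalyticAt ℚ_[p] f x₀) :
    ∃ R₀ > 0, ∃ M ≥ 0, ∀ R, 0 < R → R ≤ R₀ → ∀ (S : Finset ℤ_[p]) (t₀ : ℤ_[p]) (x u : E),
      x ∈ closedBall x₀ R → ‖u‖ ≤ R →
        ‖interpError S t₀ (fun t => f (x + t • u))‖ ≤ M * (‖u‖ / R) ^ S.card := by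
  obtain ⟨F, r, hF⟩ := hf
  obtain ⟨R₀, hR₀, hR₀r⟩ := ENNReal.lt_iff_exists_nnreal_btwn.1 hF.r_pos
  obtain ⟨M, hM, hMF⟩ := F.norm_mul_pow_le_of_lt_radius (hR₀r.trans_le hF.r_le)
  refine ⟨R₀, ENNReal.coe_pos.1 hR₀, M, hM.le, fun R hR hRR₀ S t₀ x u hx hu =>
    norm_interpError_le_of_hasFPowerSeriesOnBall hF hR ?_ (fun k => (hMF k).trans' ?_) S t₀ hx hu⟩
  · exact (ENNReal.ofReal_le_ofReal hRR₀).trans_lt (by rwa [ENNReal.ofReal_coe_nnreal])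
  · gcongr

end Analytic
end Interpolation

section Padic

variable (p) in
lemma one_lt_prime : (1 : ℝ) < p := Nat.one_lt_cast.2 (Fact.out : p.Prime).one_lt

lemma inv_prime_pos : (0 : ℝ) < (p : ℝ)⁻¹ := inv_pos.2 (zero_lt_one.trans (one_lt_prime p))

lemma inv_prime_lt_one : (p : ℝ)⁻¹ < 1 := inv_lt_one_of_one_lt₀ (one_lt_prime p)

lemma inv_prime_pow_le_pow {i j : ℕ} (h : i ≤ j) : (p : ℝ)⁻¹ ^ j ≤ (p : ℝ)⁻¹ ^ i :=
  pow_le_pow_of_le_one inv_prime_pos.le inv_prime_lt_one.le h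

lemma prime_pow_mul_inv_pow (j : ℕ) : (p : ℝ) ^ j * (p : ℝ)⁻¹ ^ j = 1 := by
  rw [← mul_pow, mul_inv_cancel₀ (Nat.cast_ne_zero.2 (Fact.out : p.Prime).ne_zero), one_pow]

lemma one_le_abs_mul_norm {z : ℤ} (hz : z ≠ 0) : 1 ≤ |(z : ℝ)| * ‖(z : ℚ_[p])‖ := by
  have hnorm : ‖(z : ℚ_[p])‖ = ((p : ℝ) ^ padicValInt p z)⁻¹ := by
    rw [Padic.norm_eq_zpow_neg_valuation (Int.cast_ne_zero.2 hz), Padic.valuation_intCast,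
      zpow_neg, zpow_natCast]
  have hle : (p : ℝ) ^ padicValInt p z ≤ |(z : ℝ)| := by
    exact_mod_cast Int.le_of_dvd (abs_pos.2 hz) ((dvd_abs _ _).2 (padicValInt_dvd z))
  have hpos : (0 : ℝ) < (p : ℝ) ^ padicValInt p z :=
    pow_pos (zero_lt_one.trans (one_lt_prime p)) _
  rwa [hnorm, ← div_eq_mul_inv, one_le_div hpos]

end Padic

section Balls

variable {X : Type*} [PseudoMetricSpace X]

variable (p) in
/-- The closed ball of radius `p⁻ʲ`; in an ultrametric space it is also open. -/
def padicBall (x : X) (j : ℕ) : Set X := closedBall x ((p : ℝ)⁻¹ ^ j)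

lemma self_mem_padicBall (x : X) (j : ℕ) : x ∈ padicBall p x j :=
  mem_closedBall_self (pow_pos inv_prime_pos j).le

lemma padicBall_anti (x : X) {i j : ℕ} (h : i ≤ j) : padicBall p x j ⊆ padicBall p x i :=
  closedBall_subset_closedBall (inv_prime_pow_le_pow h)

lemma exists_padicBall_subset {x : X} {U : Set X} (hU : U ∈ nhds x) : ∃ j, padicBall p x j ⊆ U := by
  obtain ⟨r, hr, hrU⟩ := Metric.mem_nhds_iff.1 hU
  obtain ⟨j, hj⟩ := exists_pow_lt_of_lt_one hr (inv_prime_lt_one (p := p))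
  exact ⟨j, (closedBall_subset_ball hj).trans hrU⟩

variable [IsUltrametricDist X]

omit [Fact p.Prime] in
lemma padicBall_eq_of_mem {x y : X} {j : ℕ} (h : y ∈ padicBall p x j) :
    padicBall p x j = padicBall p y j :=
  IsUltrametricDist.closedBall_eq_of_mem h

lemma padicBall_subset {x y : X} {i j : ℕ} (h : y ∈ padicBall p x i) (hij : i ≤ j) :
    padicBall p y j ⊆ padicBall p x i := by
  rw [padicBall_eq_of_mem h]
  exact padicBall_anti y hij

lemma isOpen_padicBall (x : X) (j : ℕ) : IsOpen (padicBall p x j) :=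
  IsUltrametricDist.isOpen_closedBall x (pow_pos inv_prime_pos j).ne'

end Balls

section NormedBalls

variable {E : Type*} [NormedAddCommGroup E]

omit [Fact p.Prime] in
lemma mem_padicBall_iff_norm {x y : E} {j : ℕ} : y ∈ padicBall p x j ↔ ‖y - x‖ ≤ (p : ℝ)⁻¹ ^ j :=
  mem_closedBall_iff_norm

variable [IsUltrametricDist E]

omit [Fact p.Prime] in
lemma norm_sub_le_of_mem_padicBall {x₀ x y : E} {j : ℕ} (hx : x ∈ padicBall p x₀ j)
    (hy : y ∈ padicBall p x₀ j) : ‖y - x‖ ≤ (p : ℝ)⁻¹ ^ j := by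
  rwa [← mem_padicBall_iff_norm, ← padicBall_eq_of_mem hx]

variable [NormedSpace ℚ_[p] E]

lemma add_padicInt_smul_mem_padicBall {x₀ x u : E} {j : ℕ} (hx : x ∈ padicBall p x₀ j)
    (hu : ‖u‖ ≤ (p : ℝ)⁻¹ ^ j) (t : ℤ_[p]) : x + (t : ℚ_[p]) • u ∈ padicBall p x₀ j := by
  rw [mem_padicBall_iff_norm, add_sub_right_comm]
  exact norm_add_padicInt_smul_le (mem_padicBall_iff_norm.1 hx) hu t

end NormedBalls

section Goodness

/-- The nodes `c, c + pᵃ, …, c + (N - 1)pᵃ` of an arithmetic progression in `ℤ_p`. -/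
noncomputable def progression (c : ℤ_[p]) (a N : ℕ) : Finset ℤ_[p] :=
  (Finset.range N).map ⟨fun i : ℕ => c + (p : ℤ_[p]) ^ a * i, fun _ _ hij =>
    Nat.cast_injective (mul_left_cancel₀
      (pow_ne_zero a (Nat.cast_ne_zero.2 (Fact.out : p.Prime).ne_zero)) (add_left_cancel hij))⟩

lemma card_progression (c : ℤ_[p]) (a N : ℕ) : (progression c a N).card = N := by
  rw [progression, Finset.card_map, Finset.card_range]

lemma mem_progression {c : ℤ_[p]} {a N : ℕ} {s : ℤ_[p]} :
    s ∈ progression c a N ↔ ∃ i < N, c + (p : ℤ_[p]) ^ a * i = s := by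
  simp only [progression, Finset.mem_map, Finset.mem_range]
  rfl

lemma progression_pairwise (c : ℤ_[p]) (a N : ℕ) :
    (progression c a N : Set ℤ_[p]).Pairwise fun s t => ((p : ℝ) ^ a * N)⁻¹ < ‖s - t‖ := by
  intro s hs t ht hst
  obtain ⟨i, hi, rfl⟩ := mem_progression.1 hs
  obtain ⟨j, hj, rfl⟩ := mem_progression.1 ht
  have hij : (i : ℤ) - j ≠ 0 := by
    intro h
    exact hst (by rw [Nat.cast_injective (sub_eq_zero.1 h)])
  have habs : |(((i : ℤ) - j : ℤ) : ℝ)| < N := by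
    have : |(i : ℤ) - j| < N := abs_lt.2 (by omega)
    exact_mod_cast this
  have hnorm : 1 < N * ‖(((i : ℤ) - j : ℤ) : ℚ_[p])‖ :=
    (one_le_abs_mul_norm hij).trans_lt
      (mul_lt_mul_of_pos_right habs (norm_pos_iff.2 (Int.cast_ne_zero.2 hij)))
  have hfactor : c + (p : ℤ_[p]) ^ a * i - (c + (p : ℤ_[p]) ^ a * j) =
      (p : ℤ_[p]) ^ a * ((i : ℤ) - j : ℤ) := by
    push_cast
    ring
  have hN : (0 : ℝ) < N := Nat.cast_pos.2 (by omega)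
  rw [hfactor, norm_mul, norm_pow, PadicInt.norm_p, mul_inv, ← inv_pow,
    ← PadicInt.padic_norm_e_of_padicInt, PadicInt.coe_intCast]
  exact mul_lt_mul_of_pos_left ((inv_lt_iff_one_lt_mul₀' hN).2 hnorm) (pow_pos inv_prime_pos a)

lemma norm_le_of_mem_progression_zero {a N : ℕ} {s : ℤ_[p]} (hs : s ∈ progression 0 a N) :
    ‖s‖ ≤ (p : ℝ)⁻¹ ^ a := by
  obtain ⟨i, -, rfl⟩ := mem_progression.1 hs
  rw [zero_add, norm_mul, norm_pow, PadicInt.norm_p]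
  exact mul_le_of_le_one_right (pow_nonneg inv_prime_pos.le _) (PadicInt.norm_le_one _)

variable {E V : Type*} [NormedAddCommGroup E] [NormedSpace ℚ_[p] E]

lemma interpError_congr [AddCommGroup V] [Module ℚ_[p] V] (S : Finset ℤ_[p]) (t₀ : ℤ_[p])
    {φ ψ : ℚ_[p] → V} (h : ∀ t : ℤ_[p], φ t = ψ t) : interpError S t₀ φ = interpError S t₀ ψ := by
  simp only [interpError, h]

variable [NormedAddCommGroup V] [NormedSpace ℚ_[p] V]

variable (p) in
/-- Interpolation of `f` along lines in the ball of radius `p⁻ᴶ` around `x₀` at `K` nodes has error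
at most `M (r / p^{1 - J})ᴷ` on balls of radius `r`. The extra factor `p⁻¹` makes the error
decay with `K` even on the full ball; it is available for an analytic `f` because the power
series of `f` converges on a larger ball. -/
def HasInterpolationBound (f : E → V) (x₀ : E) (J : ℕ) (M : ℝ) : Prop :=
  ∀ (S : Finset ℤ_[p]) (t₀ : ℤ_[p]) (x u : E), x ∈ padicBall p x₀ J → ‖u‖ ≤ (p : ℝ)⁻¹ ^ J →
    ‖interpError S t₀ (fun t => f (x + t • u))‖ ≤ M * ((p : ℝ)⁻¹ * ‖u‖ / (p : ℝ)⁻¹ ^ J) ^ S.card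

namespace HasInterpolationBound

variable {f : E → V} {x₀ : E} {J : ℕ} {M : ℝ}

lemma norm_le (hf : HasInterpolationBound p f x₀ J M) {x : E} (hx : x ∈ padicBall p x₀ J) :
    ‖f x‖ ≤ M := by
  simpa [interpError] using
    hf ∅ 0 x 0 hx (by rw [norm_zero]; exact pow_nonneg inv_prime_pos.le J)

lemma nonneg (hf : HasInterpolationBound p f x₀ J M) : 0 ≤ M :=
  (norm_nonneg _).trans (hf.norm_le (self_mem_padicBall x₀ J))

lemma mono (hf : HasInterpolationBound p f x₀ J M) {M' : ℝ} (hM : M ≤ M') :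
    HasInterpolationBound p f x₀ J M' := fun S t₀ x u hx hu =>
  (hf S t₀ x u hx hu).trans (mul_le_mul_of_nonneg_right hM
    (pow_nonneg (div_nonneg (mul_nonneg inv_prime_pos.le (norm_nonneg u))
      (pow_nonneg inv_prime_pos.le J)) _))

lemma continuousLinearMap_comp (hf : HasInterpolationBound p f x₀ J M) (ℓ : V →L[ℚ_[p]] ℚ_[p]) :
    HasInterpolationBound p (fun x => ℓ (f x)) x₀ J (‖ℓ‖ * M) := by
  intro S t₀ x u hx hu
  rw [mul_assoc]
  refine (congrArg norm (interpError_map S t₀ ℓ.toLinearMap fun t => f (x + t • u))).trans_le ?_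
  exact ℓ.le_opNorm_of_le (hf S t₀ x u hx hu)

lemma interpError_le (hf : HasInterpolationBound p f x₀ J M) (S : Finset ℤ_[p]) (t₀ : ℤ_[p])
    {x u : E} {a : ℕ} (hx : x ∈ padicBall p x₀ J) (hu : ‖u‖ ≤ (p : ℝ)⁻¹ ^ (J + a)) :
    ‖interpError S t₀ (fun t => f (x + t • u))‖ ≤ M * ((p : ℝ)⁻¹ ^ (a + 1)) ^ S.card := by
  have hq := inv_prime_pos (p := p)
  have hM := hf.nonneg
  have hratio : (p : ℝ)⁻¹ * ‖u‖ / (p : ℝ)⁻¹ ^ J ≤ (p : ℝ)⁻¹ ^ (a + 1) := by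
    rw [div_le_iff₀ (pow_pos hq J)]
    calc (p : ℝ)⁻¹ * ‖u‖ ≤ (p : ℝ)⁻¹ * (p : ℝ)⁻¹ ^ (J + a) := by gcongr
      _ = (p : ℝ)⁻¹ ^ (a + 1) * (p : ℝ)⁻¹ ^ J := by ring
  exact (hf S t₀ x u hx (hu.trans (inv_prime_pow_le_pow (Nat.le_add_right J a)))).trans (by gcongr)

variable [IsUltrametricDist E]

lemma congr (hf : HasInterpolationBound p f x₀ J M) {g : E → V}
    (hfg : Set.EqOn g f (padicBall p x₀ J)) : HasInterpolationBound p g x₀ J M := by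
  intro S t₀ x u hx hu
  rw [interpError_congr (ψ := fun t => f (x + t • u)) S t₀ fun t =>
    hfg (add_padicInt_smul_mem_padicBall hx hu t)]
  exact hf S t₀ x u hx hu

variable [IsUltrametricDist V]

/-- A Remez-type inequality: `f y` is interpolated at nodes on the line through `x` and `y` that are
so close to `x` that they lie in the small ball. -/
theorem norm_le_max (hf : HasInterpolationBound p f x₀ J M) {x y : E} (hx : x ∈ padicBall p x₀ J)
    (hy : y ∈ padicBall p x₀ J) {a : ℕ} {τ : ℝ} (hτ : 0 ≤ τ)
    (hsmall : ∀ z ∈ padicBall p x (J + a), ‖f z‖ ≤ τ) {K : ℕ} (hK : 0 < K) :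
    ‖f y‖ ≤ max (M * (p : ℝ)⁻¹ ^ K) (((p : ℝ) ^ a * K) ^ (K - 1) * τ) := by
  have hu : ‖y - x‖ ≤ (p : ℝ)⁻¹ ^ J := norm_sub_le_of_mem_padicBall hx hy
  have hp : (0 : ℝ) < p := zero_lt_one.trans (one_lt_prime p)
  have hvalues (s : ℤ_[p]) (hs : s ∈ progression 0 a K) : ‖f (x + (s : ℚ_[p]) • (y - x))‖ ≤ τ := by
    refine hsmall _ ?_
    rw [mem_padicBall_iff_norm, add_sub_cancel_left, norm_smul, add_comm J a, pow_add]
    exact mul_le_mul (norm_le_of_mem_progression_zero hs) hu (norm_nonneg _) (by positivity)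
  have hinterp := norm_le_max_interpError (φ := fun t => f (x + t • (y - x)))
    (r := ((p : ℝ) ^ a * K)⁻¹) (by positivity) hτ
    ((progression_pairwise 0 a K).imp fun _ _ => le_of_lt) hvalues 1
  rw [card_progression, inv_inv, PadicInt.coe_one, one_smul, add_sub_cancel] at hinterp
  refine hinterp.trans (max_le_max_right _ ?_)
  simpa only [card_progression, zero_add, pow_one] using
    hf.interpError_le (a := 0) (progression 0 a K) 1 hx hu

lemma exists_lt_norm {c : ℝ} {x x₁ : E} (hf : HasInterpolationBound p f x₀ J (c * ‖f x₁‖))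
    (hx₁ : x₁ ∈ padicBall p x₀ J) (hne : f x₁ ≠ 0) (hx : x ∈ padicBall p x₀ J) {a K : ℕ}
    (hK : 0 < K) (hcK : c * (p : ℝ)⁻¹ ^ K < 1)
    (hca : c * (K : ℝ) ^ (K - 1) * (p : ℝ)⁻¹ ^ (a + 1) < 1) :
    ∃ y ∈ padicBall p x (J + a), c * ‖f x₁‖ * ((p : ℝ)⁻¹ ^ (a + 1)) ^ K < ‖f y‖ := by
  by_contra! hsmall
  have hq := inv_prime_pos (p := p)
  have hN : 0 < ‖f x₁‖ := norm_pos_iff.2 hne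
  have hM := hf.nonneg
  have hpq : (p : ℝ) ^ a * (p : ℝ)⁻¹ ^ (a + 1) ≤ 1 := by
    rw [pow_succ, ← mul_assoc, prime_pow_mul_inv_pow, one_mul]
    exact inv_prime_lt_one.le
  refine (hf.norm_le_max hx hx₁ (by positivity) hsmall hK).not_gt (max_lt ?_ ?_)
  · calc c * ‖f x₁‖ * (p : ℝ)⁻¹ ^ K = c * (p : ℝ)⁻¹ ^ K * ‖f x₁‖ := by ring
      _ < ‖f x₁‖ := mul_lt_of_lt_one_left hN hcK
  · obtain ⟨k, rfl⟩ := Nat.exists_eq_add_of_le' hK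
    rw [Nat.add_sub_cancel] at hca ⊢
    calc ((p : ℝ) ^ a * (k + 1 : ℕ)) ^ k * (c * ‖f x₁‖ * ((p : ℝ)⁻¹ ^ (a + 1)) ^ (k + 1))
        = ((p : ℝ) ^ a * (p : ℝ)⁻¹ ^ (a + 1)) ^ k *
            (((k + 1 : ℕ) : ℝ) ^ k * (c * ‖f x₁‖) * (p : ℝ)⁻¹ ^ (a + 1)) := by ring
      _ ≤ 1 * (((k + 1 : ℕ) : ℝ) ^ k * (c * ‖f x₁‖) * (p : ℝ)⁻¹ ^ (a + 1)) := by
          gcongr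
          exact pow_le_one₀ (by positivity) hpq
      _ = c * ((k + 1 : ℕ) : ℝ) ^ k * (p : ℝ)⁻¹ ^ (a + 1) * ‖f x₁‖ := by ring
      _ < ‖f x₁‖ := mul_lt_of_lt_one_left hN hca

end HasInterpolationBound

variable (p) in
/-- In every ball contained in the ball of radius `p^{-j₀}` around `x₀`, and for every point `y` of
it with `f y ≠ 0`, there is a point where `f` is at least as large as at `y` and exceeds all errors
of interpolation from `K` nodes on that ball. -/
def HasDominantPoints (f : E → V) (K : ℕ) (x₀ : E) (j₀ : ℕ) : Prop :=
  ∀ x ∈ padicBall p x₀ j₀, ∀ j, j₀ ≤ j → ∀ y ∈ padicBall p x j, f y ≠ 0 →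
    ∃ x₁ ∈ padicBall p x j, ‖f y‖ ≤ ‖f x₁‖ ∧ ∀ S : Finset ℤ_[p], S.card = K → ∀ u : E,
      ‖u‖ ≤ (p : ℝ)⁻¹ ^ j → ‖interpError S 0 (fun t => f (x₁ + t • u))‖ < ‖f x₁‖

variable [IsUltrametricDist E] [IsUltrametricDist V]

theorem HasInterpolationBound.hasDominantPoints {f : E → V} {x₀ x₁ : E} {J : ℕ} {c : ℝ}
    (hf : HasInterpolationBound p f x₀ J (c * ‖f x₁‖)) (hx₁ : x₁ ∈ padicBall p x₀ J) (hc : 0 ≤ c)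
    {a K : ℕ} (hK : 0 < K) (hcK : c * (p : ℝ)⁻¹ ^ K < 1)
    (hca : c * (K : ℝ) ^ (K - 1) * (p : ℝ)⁻¹ ^ (a + 1) < 1) :
    HasDominantPoints p f K x₀ (J + a) := by
  intro x hx j hj y hy hne
  obtain ⟨b, rfl⟩ := Nat.exists_eq_add_of_le ((Nat.le_add_right J a).trans hj)
  have hxJ := padicBall_anti x₀ (Nat.le_add_right J a) hx
  have hball := padicBall_subset hxJ (Nat.le_add_right J b)
  have hcb : c * (K : ℝ) ^ (K - 1) * (p : ℝ)⁻¹ ^ (b + 1) < 1 :=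
    (mul_le_mul_of_nonneg_left (inv_prime_pow_le_pow (by omega)) (by positivity)).trans_lt hca
  have hne₁ : f x₁ ≠ 0 := fun h =>
    hne (norm_le_zero_iff.1 (by simpa [h] using hf.norm_le (hball hy)))
  obtain ⟨z, hz, hlt⟩ := hf.exists_lt_norm hx₁ hne₁ hxJ hK hcK hcb
  obtain ⟨w, hw, hyw, hzw⟩ : ∃ w ∈ padicBall p x (J + b), ‖f y‖ ≤ ‖f w‖ ∧ ‖f z‖ ≤ ‖f w‖ := by
    rcases le_total ‖f y‖ ‖f z‖ with h | h
    exacts [⟨z, hz, h, le_rfl⟩, ⟨y, hy, le_rfl, h⟩]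
  refine ⟨w, hw, hyw, fun S hS u hu => ?_⟩
  have herror := hf.interpError_le S 0 (hball hw) hu
  rw [hS] at herror
  exact herror.trans_lt (hlt.trans_le hzw)

theorem exists_hasInterpolationBound {f : E → V} {x₀ : E} (hf : AnalyticAt ℚ_[p] f x₀) :
    ∃ J₀ M, ∀ J, J₀ ≤ J → HasInterpolationBound p f x₀ J M := by
  obtain ⟨R, hR, M, -, hM⟩ := exists_norm_interpError_le_of_analyticAt hf
  obtain ⟨J₀, hJ₀⟩ := exists_pow_lt_of_lt_one hR (inv_prime_lt_one (p := p))
  refine ⟨J₀ + 1, M, fun J hJ S t₀ x u hx hu => ?_⟩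
  obtain ⟨i, rfl⟩ := Nat.exists_eq_add_of_le' ((Nat.le_add_left 1 J₀).trans hJ)
  have hq := inv_prime_pos (p := p)
  have hscale : (p : ℝ)⁻¹ * ‖u‖ / (p : ℝ)⁻¹ ^ (i + 1) = ‖u‖ / (p : ℝ)⁻¹ ^ i := by
    rw [pow_succ', mul_div_mul_left _ _ hq.ne']
  rw [hscale]
  exact hM _ (pow_pos hq i) ((inv_prime_pow_le_pow (by omega)).trans hJ₀.le) S t₀ x u
    (padicBall_anti x₀ (Nat.le_succ i) hx) (hu.trans (inv_prime_pow_le_pow (Nat.le_succ i)))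

end Goodness

section FiniteDimensional

lemma exists_norm_le_mul_norm_map {𝕜 W F : Type*} [NontriviallyNormedField 𝕜] [CompleteSpace 𝕜]
    [NormedAddCommGroup W] [NormedSpace 𝕜 W] [FiniteDimensional 𝕜 W]
    [NormedAddCommGroup F] [NormedSpace 𝕜 F] (T : W →ₗ[𝕜] F) :
    ∃ κ : ℝ, 0 ≤ κ ∧ ∀ w, ∃ w', T w' = T w ∧ ‖w'‖ ≤ κ * ‖T w‖ := by
  obtain ⟨g, hg⟩ := T.rangeRestrict.exists_rightInverse_of_surjective T.range_rangeRestrict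
  let G := LinearMap.toContinuousLinearMap g
  refine ⟨‖G‖, norm_nonneg G, fun w => ⟨g (T.rangeRestrict w), ?_, G.le_opNorm _⟩⟩
  exact congrArg Subtype.val (LinearMap.congr_fun hg (T.rangeRestrict w))

lemma exists_eqOn_norm_le {X V : Type*} [TopologicalSpace X] [NormedAddCommGroup V]
    [NormedSpace ℚ_[p] V] [FiniteDimensional ℚ_[p] V] {B : Set X} (hB : IsCompact B)
    (hne : B.Nonempty) {f : X → V} (hf : ContinuousOn f B) :
    ∃ κ : ℝ, 0 ≤ κ ∧ ∀ ℓ : V →L[ℚ_[p]] ℚ_[p], ∃ ℓ' : V →L[ℚ_[p]] ℚ_[p], ∃ x₁ ∈ B,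
      Set.EqOn (fun x => ℓ (f x)) (fun x => ℓ' (f x)) B ∧ ‖ℓ'‖ ≤ κ * ‖ℓ (f x₁)‖ := by
  have : CompactSpace B := isCompact_iff_compactSpace.1 hB
  let T : (V →L[ℚ_[p]] ℚ_[p]) →ₗ[ℚ_[p]] C(B, ℚ_[p]) :=
    { toFun := fun ℓ => ⟨fun x => ℓ (f x), ℓ.continuous.comp hf.domRestrict⟩
      map_add' := fun _ _ => rfl
      map_smul' := fun _ _ => rfl }
  obtain ⟨κ, hκ, hT⟩ := exists_norm_le_mul_norm_map T
  refine ⟨κ, hκ, fun ℓ => ?_⟩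
  obtain ⟨ℓ', heq, hnorm⟩ := hT ℓ
  obtain ⟨x₁, hx₁, hmax⟩ := hB.exists_isMaxOn hne (ℓ.continuous.comp_continuousOn hf).norm
  refine ⟨ℓ', x₁, hx₁, fun x hx => (DFunLike.congr_fun heq ⟨x, hx⟩).symm, hnorm.trans ?_⟩
  exact mul_le_mul_of_nonneg_left
    ((ContinuousMap.norm_le _ (norm_nonneg _)).2 fun x => hmax x.2) hκ

variable {E V : Type*} [NormedAddCommGroup E] [NormedSpace ℚ_[p] E] [IsUltrametricDist E]
variable [NormedAddCommGroup V] [NormedSpace ℚ_[p] V]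

lemma HasInterpolationBound.exists_forall_comp [ProperSpace E] [FiniteDimensional ℚ_[p] V]
    {f : E → V} {x₀ : E} {J : ℕ} {M : ℝ} (hf : HasInterpolationBound p f x₀ J M)
    (hcont : ContinuousOn f (padicBall p x₀ J)) :
    ∃ c : ℝ, 0 ≤ c ∧ ∀ ℓ : V →L[ℚ_[p]] ℚ_[p], ∃ x₁ ∈ padicBall p x₀ J,
      HasInterpolationBound p (fun x => ℓ (f x)) x₀ J (c * ‖ℓ (f x₁)‖) := by
  obtain ⟨κ, hκ, hf'⟩ :=
    exists_eqOn_norm_le (p := p) (isCompact_closedBall x₀ _) ⟨x₀, self_mem_padicBall x₀ J⟩ hcont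
  refine ⟨κ * M, mul_nonneg hκ hf.nonneg, fun ℓ => ?_⟩
  obtain ⟨ℓ', x₁, hx₁, heq, hnorm⟩ := hf' ℓ
  refine ⟨x₁, hx₁, ((hf.continuousLinearMap_comp ℓ').mono ?_).congr heq⟩
  rw [mul_right_comm]
  exact mul_le_mul_of_nonneg_right hnorm hf.nonneg

lemma exists_mul_inv_prime_pow_lt_one (c : ℝ) : ∃ k, c * (p : ℝ)⁻¹ ^ (k + 1) < 1 := by
  have htendsto : Filter.Tendsto (fun k => c * (p : ℝ)⁻¹ ^ (k + 1)) Filter.atTop (nhds 0) := by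
    simpa using ((tendsto_pow_atTop_nhds_zero_of_lt_one inv_prime_pos.le
      (inv_prime_lt_one (p := p))).comp (Filter.tendsto_add_atTop_nat 1)).const_mul c
  exact (htendsto.eventually (gt_mem_nhds one_pos)).exists

variable [IsUltrametricDist V]

theorem exists_forall_hasDominantPoints [ProperSpace E] [FiniteDimensional ℚ_[p] V] {f : E → V}
    {x₀ : E} (hf : AnalyticAt ℚ_[p] f x₀) {U : Set E} (hU : U ∈ nhds x₀) :
    ∃ j₀ K, padicBall p x₀ j₀ ⊆ U ∧
      ∀ ℓ : V →L[ℚ_[p]] ℚ_[p], HasDominantPoints p (fun x => ℓ (f x)) K x₀ j₀ := by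
  obtain ⟨J₀, M, hM⟩ := exists_hasInterpolationBound hf
  obtain ⟨J₁, hJ₁⟩ :=
    exists_padicBall_subset (p := p) (Filter.inter_mem hU hf.eventually_continuousAt)
  have hsub := (padicBall_anti x₀ (le_max_right J₀ J₁)).trans hJ₁
  obtain ⟨c, hc, hbound⟩ := (hM _ (le_max_left J₀ J₁)).exists_forall_comp fun x hx =>
    (hsub hx).2.continuousWithinAt
  obtain ⟨k, hk⟩ := exists_mul_inv_prime_pow_lt_one (p := p) c
  obtain ⟨a, ha⟩ := exists_mul_inv_prime_pow_lt_one (p := p) (c * ((k + 1 : ℕ) : ℝ) ^ (k + 1 - 1))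
  refine ⟨max J₀ J₁ + a, k + 1, fun x hx => (hsub (padicBall_anti x₀ (by omega) hx)).1,
    fun ℓ => ?_⟩
  obtain ⟨x₁, hx₁, hℓ⟩ := hbound ℓ
  exact hℓ.hasDominantPoints hx₁ hc k.succ_pos hk ha

end FiniteDimensional

section Counting

lemma progression_one_pairwise {L : ℕ} :
    (progression (1 : ℤ_[p]) 1 (p ^ L) : Set ℤ_[p]).Pairwise
      fun s t => (p : ℝ)⁻¹ ^ L ≤ ‖s - t‖ := by
  refine (progression_pairwise 1 1 (p ^ L)).imp fun s t hst => ?_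
  rw [← inv_inv (‖s - t‖), inv_pow]
  by_contra! hlt
  have hle := (PadicInt.norm_lt_pow_iff_norm_le_pow_sub_one (s - t) (-L)).1 (by
    simpa [zpow_neg] using hlt)
  rw [← neg_add', zpow_neg, ← Nat.cast_one (R := ℤ), ← Nat.cast_add, zpow_natCast] at hle
  refine hst.not_ge (hle.trans_eq ?_)
  rw [pow_one, Nat.cast_pow, ← pow_succ']

lemma norm_eq_one_of_mem_progression_one {N : ℕ} {s : ℤ_[p]} (hs : s ∈ progression 1 1 N) :
    ‖s‖ = 1 := by
  obtain ⟨i, -, rfl⟩ := mem_progression.1 hs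
  have hlt : ‖(p : ℤ_[p]) ^ 1 * i‖ < ‖(1 : ℤ_[p])‖ := by
    rw [norm_mul, pow_one, PadicInt.norm_p, norm_one]
    exact mul_lt_one_of_nonneg_of_lt_one_left inv_prime_pos.le inv_prime_lt_one
      (PadicInt.norm_le_one _)
  rw [IsUltrametricDist.norm_add_eq_max_of_norm_ne_norm hlt.ne', max_eq_left hlt.le, norm_one]

variable {V : Type*} [NormedAddCommGroup V] [NormedSpace ℚ_[p] V] [IsUltrametricDist V]

lemma card_lt_of_forall_norm_interpError_lt {A : Finset ℤ_[p]} {r : ℝ} (hr : 0 < r) (hr1 : r ≤ 1)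
    (hA : (A : Set ℤ_[p]).Pairwise fun s t => r ≤ ‖s - t‖) {t₀ : ℤ_[p]} {φ : ℚ_[p] → V} {K : ℕ}
    (hdom : ∀ S ⊆ A, S.card = K → ‖interpError S t₀ φ‖ < ‖φ t₀‖)
    (hsmall : ∀ s ∈ A, ‖φ s‖ < r ^ K * ‖φ t₀‖) : A.card < K := by
  by_contra! hcard
  obtain ⟨S, hSA, rfl⟩ := Finset.exists_subset_card_eq hcard
  have hpos : 0 < ‖φ t₀‖ := (norm_nonneg _).trans_lt (hdom S hSA rfl)
  let τ : ℝ≥0 := S.sup fun s => ‖φ s‖₊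
  have hτ : (τ : ℝ) < r ^ S.card * ‖φ t₀‖ := by
    have hb : 0 < r ^ S.card * ‖φ t₀‖ := by positivity
    rw [← Real.lt_toNNReal_iff_coe_lt, Finset.sup_lt_iff (Real.toNNReal_pos.2 hb)]
    exact fun s hs => Real.lt_toNNReal_iff_coe_lt.2 (hsmall s (hSA hs))
  have hφ (s) (hs : s ∈ S) : ‖φ s‖ ≤ τ :=
    NNReal.coe_le_coe.2 (Finset.le_sup (f := fun s : ℤ_[p] => ‖φ s‖₊) hs)
  refine (norm_le_max_interpError hr τ.2 (hA.mono hSA) hφ t₀).not_gt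
    (max_lt (hdom S hSA rfl) ?_)
  calc r⁻¹ ^ (S.card - 1) * τ ≤ r⁻¹ ^ S.card * τ := by
        gcongr
        exacts [(one_le_inv₀ hr).2 hr1, Nat.sub_le _ _]
    _ < r⁻¹ ^ S.card * (r ^ S.card * ‖φ t₀‖) := by gcongr
    _ = ‖φ t₀‖ := by rw [← mul_assoc, ← mul_pow, inv_mul_cancel₀ hr.ne', one_pow, one_mul]

end Counting

section Haar

open scoped Pointwise

variable {E : Type*} [NormedAddCommGroup E]

section Smul

variable [NormedSpace ℚ_[p] E]

lemma units_smul_padicBall_zero {a : ℚ_[p]ˣ} (ha : ‖(a : ℚ_[p])‖ = 1) (j : ℕ) :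
    a • padicBall p (0 : E) j = padicBall p 0 j := by
  ext x
  rw [Set.mem_smul_set_iff_inv_smul_mem, mem_padicBall_iff_norm, mem_padicBall_iff_norm,
    sub_zero, sub_zero, Units.smul_def, norm_smul, Units.val_inv_eq_inv_val, norm_inv, ha,
    inv_one, one_mul]

lemma prime_smul_padicBall_zero {a : ℚ_[p]ˣ} (ha : (a : ℚ_[p]) = p) (j : ℕ) :
    a • padicBall p (0 : E) j = padicBall p 0 (j + 1) := by
  ext x
  have hp : (0 : ℝ) < p := zero_lt_one.trans (one_lt_prime p)
  rw [Set.mem_smul_set_iff_inv_smul_mem, mem_padicBall_iff_norm, mem_padicBall_iff_norm,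
    sub_zero, sub_zero, Units.smul_def, norm_smul, Units.val_inv_eq_inv_val, norm_inv, ha,
    Padic.norm_p, inv_inv, pow_succ', ← le_inv_mul_iff₀ hp]

end Smul

variable [MeasurableSpace E] [BorelSpace E]

omit [Fact p.Prime] in
lemma measure_padicBall_eq (μ : Measure E) [μ.IsAddHaarMeasure] (x y : E) (j : ℕ) :
    μ (padicBall p x j) = μ (padicBall p y j) := by
  rw [padicBall, padicBall, Measure.addHaar_closedBall_center μ x,
    Measure.addHaar_closedBall_center μ y]

variable [NormedSpace ℚ_[p] E] [ProperSpace E]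

variable [IsUltrametricDist E] (μ : Measure E) [μ.IsAddHaarMeasure]

omit [BorelSpace E] [NormedSpace ℚ_[p] E] [ProperSpace E] in
lemma measure_padicBall_ne_zero (x : E) (j : ℕ) : μ (padicBall p x j) ≠ 0 :=
  (isOpen_padicBall x j).measure_ne_zero μ ⟨x, self_mem_padicBall x j⟩

omit [Fact p.Prime] [BorelSpace E] [IsUltrametricDist E] [NormedSpace ℚ_[p] E] in
lemma measure_padicBall_ne_top (x : E) (j : ℕ) : μ (padicBall p x j) ≠ ∞ :=
  measure_closedBall_lt_top.ne

lemma distribHaarChar_eq_one_of_norm_eq_one {a : ℚ_[p]ˣ} (ha : ‖(a : ℚ_[p])‖ = 1) :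
    distribHaarChar E a = 1 :=
  distribHaarChar_eq_of_measure_smul_eq_mul (μ := Measure.addHaar) (s := padicBall p (0 : E) 0)
    (measure_padicBall_ne_zero _ _ _) (measure_padicBall_ne_top _ _ _) (by
      rw [units_smul_padicBall_zero ha, ENNReal.coe_one, one_mul])

lemma measure_preimage_add_smul {a : ℚ_[p]} (ha : ‖a‖ = 1) (x : E) (A : Set E) :
    μ ((fun u => x + a • u) ⁻¹' A) = μ A := by
  have ha0 : a ≠ 0 := norm_pos_iff.1 (ha ▸ one_pos)
  have himage : (fun u => x + a • u) ⁻¹' A = (Units.mk0 a ha0)⁻¹ • ((fun u => x + u) ⁻¹' A) := by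
    ext u
    rw [Set.mem_inv_smul_set_iff]
    rfl
  rw [himage, ← distribHaarChar_mul, map_inv, distribHaarChar_eq_one_of_norm_eq_one ha,
    inv_one, ENNReal.coe_one, one_mul, measure_preimage_add]

lemma exists_measure_padicBall_le_mul_succ :
    ∃ D : ℝ≥0, ∀ (x : E) (j : ℕ), μ (padicBall p x j) ≤ D * μ (padicBall p x (j + 1)) := by
  let a : ℚ_[p]ˣ := Units.mk0 p (Nat.cast_ne_zero.2 (Fact.out : p.Prime).ne_zero)
  refine ⟨(distribHaarChar E a)⁻¹, fun x j => ?_⟩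
  rw [measure_padicBall_eq μ x 0 j, measure_padicBall_eq μ x 0 (j + 1),
    ← prime_smul_padicBall_zero (a := a) rfl, ← distribHaarChar_mul, ← mul_assoc,
    ← ENNReal.coe_mul, inv_mul_cancel₀ (distribHaarChar_pos).ne', ENNReal.coe_one, one_mul]

lemma card_mul_measure_le {S : Finset ℤ_[p]} (hS : ∀ s ∈ S, ‖s‖ = 1) {x : E} {j : ℕ} {A : Set E}
    (hA : MeasurableSet A) (hAx : A ⊆ padicBall p x j) {K : ℕ}
    (hcount : ∀ u ∈ padicBall p (0 : E) j, ∀ B ⊆ S,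
      (∀ s ∈ B, x + (s : ℚ_[p]) • u ∈ A) → B.card ≤ K) :
    S.card * μ A ≤ K * μ (padicBall p x j) := by
  classical
  let T (s : ℤ_[p]) : Set E := (fun u => x + (s : ℚ_[p]) • u) ⁻¹' A
  have hT (s) : MeasurableSet (T s) :=
    (by fun_prop : Measurable fun u : E => x + (s : ℚ_[p]) • u) hA
  have hsupport {s u} (hs : s ∈ S) (hu : u ∈ T s) : u ∈ padicBall p (0 : E) j := by
    have := hAx hu
    rwa [mem_padicBall_iff_norm, add_sub_cancel_left, norm_smul, ← PadicInt.norm_def, hS s hs,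
      one_mul, ← sub_zero u, ← mem_padicBall_iff_norm] at this
  calc (S.card : ℝ≥0∞) * μ A = ∑ s ∈ S, μ (T s) := by
        rw [Finset.sum_congr rfl fun s hs => measure_preimage_add_smul μ (hS s hs) x A,
          Finset.sum_const, nsmul_eq_mul]
    _ = ∫⁻ u, ∑ s ∈ S, (T s).indicator 1 u ∂μ := by
        rw [lintegral_finsetSum _ fun s _ => measurable_one.indicator (hT s)]
        exact Finset.sum_congr rfl fun s _ => (lintegral_indicator_one (hT s)).symm
    _ ≤ ∫⁻ u, (padicBall p (0 : E) j).indicator (fun _ => (K : ℝ≥0∞)) u ∂μ := by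
        refine lintegral_mono fun u => ?_
        by_cases hu : u ∈ padicBall p (0 : E) j
        · rw [Set.indicator_of_mem hu]
          simp only [Set.indicator_apply, Pi.one_apply, Finset.sum_boole]
          exact Nat.cast_le.2
            (hcount u hu _ (Finset.filter_subset _ _) fun s hs => (Finset.mem_filter.1 hs).2)
        · rw [Set.indicator_of_notMem hu]
          exact (Finset.sum_eq_zero fun s hs =>
            Set.indicator_of_notMem (fun h => hu (hsupport hs h)) _).le
    _ = K * μ (padicBall p x j) := by
        rw [lintegral_indicator_const (isOpen_padicBall 0 j).measurableSet,
          measure_padicBall_eq μ 0 x]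

variable {V : Type*} [NormedAddCommGroup V] [NormedSpace ℚ_[p] V] [IsUltrametricDist V]

variable (p) in
/-- On every ball of radius at most `p^{-j₀}` around a point of the ball of radius `p^{-j₀}` around
`x₀`, the set where `g` is `p^{LK}` times smaller than one of its values on that ball has relative
measure at most `K / p^L`. This is a discrete form of the `(C, α)`-good property, with
`α = 1 / K`. -/
def IsDiscretelyGood (g : E → V) (K : ℕ) (x₀ : E) (j₀ : ℕ) : Prop :=
  ∀ x ∈ padicBall p x₀ j₀, ∀ j, j₀ ≤ j → ∀ y₁ ∈ padicBall p x j, ∀ L : ℕ,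
    (p ^ L : ℕ) * μ {y ∈ padicBall p x j | ‖g y‖ < ((p : ℝ)⁻¹ ^ L) ^ K * ‖g y₁‖} ≤
      K * μ (padicBall p x j)

theorem HasDominantPoints.isDiscretelyGood {g : E → V} {K : ℕ} {x₀ : E} {j₀ : ℕ}
    (hg : HasDominantPoints p g K x₀ j₀) (hcont : ContinuousOn g (padicBall p x₀ j₀)) :
    IsDiscretelyGood p μ g K x₀ j₀ := by
  intro x hx j hj y₁ hy₁ L
  rcases eq_or_ne (g y₁) 0 with hzero | hne
  · simp [hzero, (norm_nonneg _).not_gt]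
  obtain ⟨x₁, hx₁, hle, hdom⟩ := hg x hx j hj y₁ hy₁ hne
  have hopen : IsOpen {y ∈ padicBall p x j | ‖g y‖ < ((p : ℝ)⁻¹ ^ L) ^ K * ‖g y₁‖} :=
    (hcont.mono (padicBall_subset hx hj)).norm.isOpen_inter_preimage (isOpen_padicBall x j)
      isOpen_Iio
  rw [padicBall_eq_of_mem hx₁] at hopen ⊢
  have hcard := card_mul_measure_le μ (S := progression 1 1 (p ^ L))
    (fun s => norm_eq_one_of_mem_progression_one) hopen.measurableSet (fun y hy => hy.1)
    (K := K) fun u hu B hB hsmall => ?_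
  · rwa [card_progression] at hcard
  rw [mem_padicBall_iff_norm, sub_zero] at hu
  refine (card_lt_of_forall_norm_interpError_lt (t₀ := 0) (φ := fun t => g (x₁ + t • u))
    (pow_pos inv_prime_pos L) (pow_le_one₀ inv_prime_pos.le inv_prime_lt_one.le)
    (progression_one_pairwise.mono (Finset.coe_subset.2 hB))
    (fun S _ hS => ?_) fun s hs => ?_).le
  · simpa using hdom S hS u hu
  · refine (hsmall s hs).2.trans_le ?_
    simpa using mul_le_mul_of_nonneg_left hle (pow_nonneg (pow_nonneg inv_prime_pos.le L) K)

theorem exists_forall_isDiscretelyGood [FiniteDimensional ℚ_[p] V] {f : E → V} {x₀ : E}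
    (hf : AnalyticAt ℚ_[p] f x₀) {U : Set E} (hU : U ∈ nhds x₀) :
    ∃ j₀ K, padicBall p x₀ j₀ ⊆ U ∧ ContinuousOn f (padicBall p x₀ j₀) ∧
      ∀ (μ : Measure E) [μ.IsAddHaarMeasure] (ℓ : V →L[ℚ_[p]] ℚ_[p]),
        IsDiscretelyGood p μ (fun x => ℓ (f x)) K x₀ j₀ := by
  obtain ⟨j₀, K, hsub, hdom⟩ :=
    exists_forall_hasDominantPoints hf (Filter.inter_mem hU hf.eventually_continuousAt)
  have hcont : ContinuousOn f (padicBall p x₀ j₀) := fun x hx => (hsub hx).2.continuousWithinAt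
  exact ⟨j₀, K, fun x hx => (hsub hx).1, hcont, fun μ _ ℓ =>
    (hdom ℓ).isDiscretelyGood μ (ℓ.continuous.comp_continuousOn hcont)⟩

end Haar

section Covering

lemma measure_le_mul_of_pairwiseDisjoint {X : Type*} [MeasurableSpace X] (μ : Measure X)
    {𝓕 : Set (Set X)} (hcount : 𝓕.Countable) (hdisj : 𝓕.PairwiseDisjoint id)
    (hmeas : ∀ S ∈ 𝓕, MeasurableSet S) {A B : Set X} (hB : B ⊆ ⋃ S ∈ 𝓕, S)
    (hA : ∀ S ∈ 𝓕, S ⊆ A) {C : ℝ≥0∞} (hle : ∀ S ∈ 𝓕, μ (B ∩ S) ≤ C * μ S) : μ B ≤ C * μ A :=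
  calc μ B ≤ μ (⋃ S ∈ 𝓕, B ∩ S) :=
        measure_mono (by rw [← Set.inter_iUnion₂]; exact Set.subset_inter subset_rfl hB)
    _ ≤ ∑' S : 𝓕, μ (B ∩ S) := measure_biUnion_le μ hcount _
    _ ≤ ∑' S : 𝓕, C * μ S := ENNReal.tsum_le_tsum fun S => hle S S.2
    _ = C * μ (⋃ S ∈ 𝓕, S) := by
        rw [ENNReal.tsum_mul_left]
        exact congrArg (C * ·) (measure_biUnion hcount hdisj hmeas).symm
    _ ≤ C * μ A := by gcongr; exact Set.iUnion₂_subset hA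

variable {X : Type*} [PseudoMetricSpace X] {Q : Set X → Prop}

lemma exists_minimal_padicBall (hQ : Antitone Q) {y : X} {j l : ℕ} (hl : Q (padicBall p y l))
    (hj : ¬ Q (padicBall p y j)) :
    ∃ i, j ≤ i ∧ Q (padicBall p y (i + 1)) ∧ ¬ Q (padicBall p y i) := by
  classical
  have hex : ∃ m, Q (padicBall p y (j + m)) :=
    ⟨l, hQ (padicBall_anti y (Nat.le_add_left l j)) hl⟩
  obtain ⟨m, hm⟩ : ∃ m, Nat.find hex = m + 1 :=
    Nat.exists_eq_succ_of_ne_zero fun h0 => hj (by simpa [h0] using Nat.find_spec hex)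
  refine ⟨j + m, Nat.le_add_right j m, ?_, Nat.find_min hex (by omega)⟩
  have := Nat.find_spec hex
  rwa [hm] at this

variable [IsUltrametricDist X]

lemma pairwiseDisjoint_minimal_padicBall (hQ : Antitone Q) :
    {S : Set X | ∃ y i, S = padicBall p y (i + 1) ∧ Q S ∧ ¬ Q (padicBall p y i)}.PairwiseDisjoint
      id := by
  rintro _ ⟨y, i, rfl, hy, hyi⟩ _ ⟨z, l, rfl, hz, hzl⟩ hne
  refine Set.disjoint_left.2 fun w hwy hwz => hne ?_
  simp only [id] at hwy hwz
  rw [padicBall_eq_of_mem hwy] at hy ⊢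
  rw [padicBall_eq_of_mem hwz] at hz ⊢
  rw [padicBall_eq_of_mem (padicBall_anti y i.le_succ hwy)] at hyi
  rw [padicBall_eq_of_mem (padicBall_anti z l.le_succ hwz)] at hzl
  rcases lt_trichotomy i l with hil | rfl | hli
  · exact absurd (hQ (padicBall_anti w hil) hy) hzl
  · rfl
  · exact absurd (hQ (padicBall_anti w hli) hz) hyi

variable [SecondCountableTopology X] [MeasurableSpace X] [OpensMeasurableSpace X] (μ : Measure X)

/-- The largest balls with property `Q` around the points of `B` are disjoint. -/
lemma measure_le_mul_of_minimal_padicBall (hQ : Antitone Q) {x : X} {j : ℕ}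
    (hj : ¬ Q (padicBall p x j)) {B : Set X} (hB : B ⊆ padicBall p x j)
    (hBQ : ∀ y ∈ B, ∃ l, Q (padicBall p y l)) {C : ℝ≥0∞}
    (hle : ∀ y ∈ padicBall p x j, ∀ i, j ≤ i → Q (padicBall p y (i + 1)) →
      ¬ Q (padicBall p y i) → μ (B ∩ padicBall p y (i + 1)) ≤ C * μ (padicBall p y (i + 1))) :
    μ B ≤ C * μ (padicBall p x j) := by
  let 𝓕 : Set (Set X) := {S | ∃ y ∈ padicBall p x j, ∃ i, j ≤ i ∧ S = padicBall p y (i + 1) ∧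
    Q (padicBall p y (i + 1)) ∧ ¬ Q (padicBall p y i)}
  have hdisj : 𝓕.PairwiseDisjoint id := (pairwiseDisjoint_minimal_padicBall (p := p) hQ).subset
    fun S ⟨y, _, i, _, hS, hQS, hQi⟩ => ⟨y, i, hS, hS ▸ hQS, hQi⟩
  have hopen : ∀ S ∈ 𝓕, IsOpen S := fun S ⟨y, _, i, _, hS, _⟩ => hS ▸ isOpen_padicBall y (i + 1)
  refine measure_le_mul_of_pairwiseDisjoint μ (hdisj.countable_of_isOpen hopen ?_) hdisj
    (fun S hS => (hopen S hS).measurableSet) (fun y hy => ?_) ?_ ?_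
  · rintro _ ⟨y, -, i, -, rfl, -⟩
    exact ⟨y, self_mem_padicBall y _⟩
  · obtain ⟨l, hl⟩ := hBQ y hy
    obtain ⟨i, hji, hQi⟩ := exists_minimal_padicBall hQ hl (by rwa [← padicBall_eq_of_mem (hB hy)])
    exact Set.mem_biUnion ⟨y, hB hy, i, hji, rfl, hQi⟩ (self_mem_padicBall y _)
  · rintro _ ⟨y, hy, i, hji, rfl, -⟩
    exact padicBall_subset hy (hji.trans i.le_succ)
  · rintro _ ⟨y, hy, i, hji, rfl, hQ1, hQ2⟩
    exact hle y hy i hji hQ1 hQ2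

end Covering

section Marked

variable {P X : Type*} [PartialOrder P]

/-- The point `y` is marked (Kleinbock–Margulis): `P'` contains a flag all of whose members have
`ψ`-value in `[ε, ρ)` at `y`, while every other element of `P'` comparable with the whole flag has
value at least `ρ`. -/
def IsMarked (ψ : P → X → ℝ) (ε ρ : ℝ) (P' : Set P) (y : X) : Prop :=
  ∃ F : Finset P, (F : Set P) ⊆ P' ∧ IsChain (· ≤ ·) (F : Set P) ∧
    (∀ s ∈ F, ε ≤ ψ s y ∧ ψ s y < ρ) ∧
    ∀ s ∈ P', s ∉ F → (∀ r ∈ F, s ≤ r ∨ r ≤ s) → ρ ≤ ψ s y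

variable {ψ : P → X → ℝ} {ε ρ : ℝ} {P' : Set P} {y : X}

lemma isMarked_of_forall_le (h : ∀ s ∈ P', ρ ≤ ψ s y) : IsMarked ψ ε ρ P' y :=
  ⟨∅, by simp, by simp, by simp, fun s hs _ _ => h s hs⟩

lemma IsMarked.insert {a : P} (ha : a ∈ P') (hε : ε ≤ ψ a y) (hρ : ψ a y < ρ)
    (h : IsMarked ψ ε ρ {s ∈ P' | s < a ∨ a < s} y) : IsMarked ψ ε ρ P' y := by
  classical
  obtain ⟨F, hF, hchain, hin, hout⟩ := h
  refine ⟨Insert.insert a F, ?_, ?_, ?_, fun s hs hsF hcomp => ?_⟩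
  · rw [Finset.coe_insert]
    exact Set.insert_subset ha fun s hs => (hF hs).1
  · rw [Finset.coe_insert]
    exact hchain.insert fun s hs _ => (hF hs).2.symm.imp le_of_lt le_of_lt
  · exact Finset.forall_mem_insert _ _ _ |>.2 ⟨⟨hε, hρ⟩, hin⟩
  · rw [Finset.mem_insert, not_or] at hsF
    rw [Finset.forall_mem_insert] at hcomp
    exact hout s ⟨hs, hcomp.1.imp (lt_of_le_of_ne · hsF.1) (lt_of_le_of_ne · (Ne.symm hsF.1))⟩
      hsF.2 hcomp.2

lemma measure_not_isMarked_le_add [MeasurableSpace X] (μ : Measure X) {a : P} (ha : a ∈ P')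
    {A B : Set X} (hAB : A ⊆ B) (hlt : ∀ z ∈ A, ψ a z < ρ) :
    μ {z ∈ A | ¬ IsMarked ψ ε ρ P' z} ≤
      μ {z ∈ B | ¬ IsMarked ψ ε ρ {s ∈ P' | s < a ∨ a < s} z} + μ {z ∈ B | ψ a z < ε} := by
  have hsub : {z ∈ A | ¬ IsMarked ψ ε ρ P' z} ⊆
      {z ∈ B | ¬ IsMarked ψ ε ρ {s ∈ P' | s < a ∨ a < s} z} ∪ {z ∈ B | ψ a z < ε} := by
    rintro z ⟨hz, hnot⟩
    rcases lt_or_ge (ψ a z) ε with hε | hε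
    exacts [Or.inr ⟨hAB hz, hε⟩, Or.inl ⟨hAB hz, fun h => hnot (h.insert ha hε (hlt z hz))⟩]
  exact (measure_mono hsub).trans (measure_union_le _ _)

/-- The constant of the covering estimate `measure_not_isMarked_le` for a poset of height `k` on a
space with doubling constant `D`. -/
noncomputable def markedConst (D : ℝ≥0∞) : ℕ → ℝ≥0∞
  | 0 => 0
  | k + 1 => D * (markedConst D k + 1)

lemma markedConst_ne_top {D : ℝ≥0∞} (hD : D ≠ ∞) (k : ℕ) : markedConst D k ≠ ∞ := by
  induction k with
  | zero => exact ENNReal.zero_ne_top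
  | succ k ih => exact ENNReal.mul_ne_top hD (ENNReal.add_ne_top.2 ⟨ih, ENNReal.one_ne_top⟩)

variable [PseudoMetricSpace X] [IsUltrametricDist X] [SecondCountableTopology X]
  [MeasurableSpace X] [OpensMeasurableSpace X] {μ : Measure X}

theorem measure_not_isMarked_le {rk : P → ℕ} (hrk : StrictMono rk) {D θ : ℝ≥0∞}
    (hD : ∀ (x : X) (j : ℕ), μ (padicBall p x j) ≤ D * μ (padicBall p x (j + 1)))
    {x₀ : X} {j₀ : ℕ}
    (hopen : ∀ s, ∀ x ∈ padicBall p x₀ j₀, ψ s x < ρ → ∃ j, ∀ y ∈ padicBall p x j, ψ s y < ρ)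
    (hgood : ∀ s, ∀ x ∈ padicBall p x₀ j₀, ∀ j, j₀ ≤ j → (∃ y ∈ padicBall p x j, ρ ≤ ψ s y) →
      μ {y ∈ padicBall p x j | ψ s y < ε} ≤ θ * μ (padicBall p x j))
    (R : Finset ℕ) (hR : ∀ s ∈ P', rk s ∈ R) {x : X} (hx : x ∈ padicBall p x₀ j₀) {j : ℕ}
    (hj : j₀ ≤ j) (hP' : ∀ s ∈ P', ∃ y ∈ padicBall p x j, ρ ≤ ψ s y) :
    μ {y ∈ padicBall p x j | ¬ IsMarked ψ ε ρ P' y} ≤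
      markedConst D R.card * θ * μ (padicBall p x j) := by
  induction hk : R.card generalizing R P' x j with
  | zero =>
    have hempty : {y ∈ padicBall p x j | ¬ IsMarked ψ ε ρ P' y} = ∅ :=
      Set.eq_empty_iff_forall_notMem.2 fun y hy => hy.2 <| isMarked_of_forall_le fun s hs =>
        absurd (hR s hs) (Finset.card_eq_zero.1 hk ▸ Finset.notMem_empty _)
    rw [hempty, measure_empty]
    exact zero_le
  | succ k ih =>
    let Q (S : Set X) : Prop := ∃ s ∈ P', ∀ z ∈ S, ψ s z < ρ
    have hnotQ {S : Set X} : ¬ Q S ↔ ∀ s ∈ P', ∃ z ∈ S, ρ ≤ ψ s z := by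
      simp only [Q, not_exists, not_and, not_forall, not_lt, exists_prop]
    refine measure_le_mul_of_minimal_padicBall (p := p) μ (Q := Q)
      (fun S T hST ⟨s, hs, h⟩ => ⟨s, hs, fun z hz => h z (hST hz)⟩) (hnotQ.2 hP')
      (fun y hy => hy.1) (fun y hy => ?_) fun y hy i hji ⟨a, ha, hlt⟩ hQi => ?_
    · have hsome : ∃ s ∈ P', ψ s y < ρ := by
        by_contra! hle
        exact hy.2 (isMarked_of_forall_le hle)
      obtain ⟨s, hs, hlt⟩ := hsome
      obtain ⟨l, hl⟩ := hopen s y (padicBall_subset hx hj hy.1) hlt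
      exact ⟨l, s, hs, hl⟩
    have hy₀ := padicBall_subset hx hj hy
    have hi := hnotQ.1 hQi
    have hsmall := hgood a y hy₀ i (hj.trans hji) (hi a ha)
    have hlink := ih (P' := {s ∈ P' | s < a ∨ a < s}) (R.erase (rk a))
      (fun s hs => Finset.mem_erase.2
        ⟨hs.2.elim (fun h => (hrk h).ne) fun h => (hrk h).ne', hR s hs.1⟩)
      hy₀ (hj.trans hji) (fun s hs => hi s hs.1)
      (by rw [Finset.card_erase_of_mem (hR a ha), hk, Nat.add_sub_cancel])
    calc μ ({y ∈ padicBall p x j | ¬ IsMarked ψ ε ρ P' y} ∩ padicBall p y (i + 1))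
        ≤ μ {z ∈ padicBall p y (i + 1) | ¬ IsMarked ψ ε ρ P' z} :=
          measure_mono fun z ⟨⟨_, hz⟩, hzi⟩ => And.intro hzi hz
      _ ≤ markedConst D k * θ * μ (padicBall p y i) + θ * μ (padicBall p y i) :=
        (measure_not_isMarked_le_add μ ha (padicBall_anti y i.le_succ) hlt).trans
          (add_le_add hlink hsmall)
      _ = (markedConst D k + 1) * θ * μ (padicBall p y i) := by ring
      _ ≤ (markedConst D k + 1) * θ * (D * μ (padicBall p y (i + 1))) := by gcongr; exact hD y i
      _ = markedConst D (k + 1) * θ * μ (padicBall p y (i + 1)) := by rw [markedConst]; ring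

end Marked

section Minors

open Matrix

variable {ι κ : Type*}

lemma exists_det_submatrix_ne_zero {R : Type*} [CommRing R] [Nontrivial R] {k : ℕ}
    {w : Matrix (Fin k) ι R} (hw : LinearIndependent R w.row) :
    ∃ I : Fin k → ι, (w.submatrix id I).det ≠ 0 := by
  induction k with
  | zero => exact ⟨Fin.elim0, by simp⟩
  | succ k ih =>
    obtain ⟨I, hI⟩ := ih (w := w.submatrix Fin.succ id) (hw.comp _ (Fin.succ_injective k))
    by_contra! hzero
    let cofactor : Fin (k + 1) → R := fun i => (-1) ^ (i : ℕ) * (w.submatrix i.succAbove I).det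
    have hexpand : ∑ i, cofactor i • w.row i = 0 := by
      ext e
      have := hzero (Fin.cons e I)
      rw [det_succ_column_zero] at this
      rw [Finset.sum_apply, Pi.zero_apply, ← this]
      refine Finset.sum_congr rfl fun i _ => ?_
      exact mul_right_comm _ _ _
    have hcof := Fintype.linearIndependent_iff.1 hw cofactor hexpand 0
    simp only [cofactor, Fin.val_zero, pow_zero, one_mul, Fin.succAbove_zero] at hcof
    exact hI hcof

section Product

variable {R : Type*} [CommRing R] [IsDomain R] [Fintype κ] [DecidableEq κ]
  {A : Matrix κ κ R} {b : Matrix κ ι R}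

lemma det_ne_zero_of_linearIndependent_row_mul (h : LinearIndependent R (A * b).row) :
    A.det ≠ 0 := by
  intro hdet
  obtain ⟨c, hc, hcA⟩ := exists_vecMul_eq_zero_iff.2 hdet
  refine hc (vecMul_injective_iff.2 h ?_)
  simp only [← vecMul_vecMul, hcA, zero_vecMul]

lemma linearIndependent_row_mul (hb : LinearIndependent R b.row) (hA : A.det ≠ 0) :
    LinearIndependent R (A * b).row := by
  rw [← vecMul_injective_iff] at hb ⊢
  intro c c' h
  simp only [← vecMul_vecMul] at h
  exact vecMul_injective_iff.2 (linearIndependent_rows_of_det_ne_zero hA) (hb h)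

end Product

lemma volume_preimage_ball_toLin' [Fintype ι] [DecidableEq ι] {A : Matrix ι ι ℝ} (hA : A.det ≠ 0)
    {s : ℝ} (hs : 0 < s) :
    volume (toLin' A ⁻¹' ball 0 s) =
      ENNReal.ofReal (2 ^ Fintype.card ι * (s ^ Fintype.card ι / |A.det|)) := by
  rw [Measure.addHaar_preimage_linearMap volume (by rwa [LinearMap.det_toLin']),
    LinearMap.det_toLin', abs_inv, Real.volume_pi_ball _ hs, ← ENNReal.ofReal_mul (by positivity),
    mul_pow]
  congr 1
  ring

theorem exists_int_norm_mulVec_lt [Fintype ι] [DecidableEq ι] {A : Matrix ι ι ℝ} (hA : A.det ≠ 0)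
    {s : ℝ} (hs : 0 < s) (h : |A.det| < s ^ Fintype.card ι) :
    ∃ c : ι → ℤ, c ≠ 0 ∧ ‖A *ᵥ (fun j => (c j : ℝ))‖ < s := by
  let b := Pi.basisFun ℝ ι
  have hcovol : volume (ZSpan.fundamentalDomain b) = 1 := by
    rw [ZSpan.fundamentalDomain_pi_basisFun, volume_pi, Measure.pi_pi]
    simp
  have hvol : volume (ZSpan.fundamentalDomain b) * 2 ^ Module.finrank ℝ (ι → ℝ) <
      volume (toLin' A ⁻¹' ball 0 s) := by
    have htwo : (2 : ℝ≥0∞) ^ Fintype.card ι = ENNReal.ofReal (2 ^ Fintype.card ι) := by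
      rw [ENNReal.ofReal_pow zero_le_two, ENNReal.ofReal_ofNat]
    rw [hcovol, one_mul, Module.finrank_fintype_fun_eq_card, volume_preimage_ball_toLin' hA hs,
      htwo, ENNReal.ofReal_lt_ofReal_iff_of_nonneg (by positivity)]
    exact lt_mul_of_one_lt_right (by positivity) ((one_lt_div (abs_pos.2 hA)).2 h)
  have : Countable (Submodule.span ℤ (Set.range b)).toAddSubgroup :=
    inferInstanceAs (Countable (Submodule.span ℤ (Set.range b)))
  obtain ⟨x, hx, hxs⟩ := exists_ne_zero_mem_lattice_of_measure_mul_two_pow_lt_measure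
    (ZSpan.isAddFundamentalDomain' b volume)
    (fun x hx => by simpa only [Set.mem_preimage, map_neg, mem_ball_zero_iff, norm_neg] using hx)
    ((convex_ball 0 s).linear_preimage (toLin' A)) hvol
  choose c hc using (Module.Basis.mem_span_iff_repr_mem ℤ b (x : ι → ℝ)).1 x.2
  have hcx : (fun j => (c j : ℝ)) = x := funext fun j => by simpa [b] using hc j
  refine ⟨c, ?_, ?_⟩
  · rintro rfl
    exact hx (Subtype.ext (hcx.symm.trans (funext fun _ => Int.cast_zero)))
  · rwa [hcx, ← toLin'_apply, ← mem_ball_zero_iff]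

section MaxMinor

variable [Fintype κ] [DecidableEq κ]

/-- The largest absolute value of a maximal minor of `w`, i.e. the supremum norm of the exterior
product of its rows. Repeated columns are allowed; they contribute minors equal to `0`. -/
noncomputable def maxMinor (w : Matrix κ ι ℝ) : ℝ := ⨆ I : κ → ι, |(w.submatrix id I).det|

lemma abs_det_submatrix_le_maxMinor [Finite ι] (w : Matrix κ ι ℝ) (I : κ → ι) :
    |(w.submatrix id I).det| ≤ maxMinor w :=
  le_ciSup (f := fun I : κ → ι => |(w.submatrix id I).det|) (Set.finite_range _).bddAbove I

lemma maxMinor_nonneg (w : Matrix κ ι ℝ) : 0 ≤ maxMinor w :=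
  Real.iSup_nonneg fun _ => abs_nonneg _

lemma maxMinor_of_isEmpty [IsEmpty κ] (w : Matrix κ ι ℝ) : maxMinor w = 1 := by
  simp [maxMinor]

lemma exists_abs_det_submatrix_eq_maxMinor [Finite ι] {w : Matrix κ ι ℝ} (hw : 0 < maxMinor w) :
    ∃ I : κ → ι, |(w.submatrix id I).det| = maxMinor w := by
  rcases isEmpty_or_nonempty (κ → ι) with _ | _
  · exact absurd hw (by rw [maxMinor, Real.iSup_of_isEmpty]; exact lt_irrefl 0)
  · exact exists_eq_ciSup_of_finite

lemma maxMinor_mul (A : Matrix κ κ ℝ) (w : Matrix κ ι ℝ) :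
    maxMinor (A * w) = |A.det| * maxMinor w := by
  rw [maxMinor, maxMinor, Real.mul_iSup_of_nonneg (abs_nonneg _)]
  refine iSup_congr fun I => ?_
  rw [← abs_mul, ← det_mul]
  rfl

lemma maxMinor_cons_le [Finite ι] {k : ℕ} (w : Matrix (Fin k) ι ℝ) {v : ι → ℝ} {s : ℝ} (hs : 0 ≤ s)
    (hv : ∀ i, |v i| ≤ s) : maxMinor (Matrix.of (Fin.cons v w)) ≤ (k + 1) * s * maxMinor w := by
  have hw := maxMinor_nonneg w
  refine Real.iSup_le (fun I => ?_) (by positivity)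
  rw [det_succ_row_zero]
  calc |∑ j : Fin (k + 1), (-1) ^ (j : ℕ) * v (I j) * (w.submatrix id (I ∘ j.succAbove)).det|
      ≤ ∑ j : Fin (k + 1), |(-1) ^ (j : ℕ) * v (I j) * (w.submatrix id (I ∘ j.succAbove)).det| :=
        Finset.abs_sum_le_sum_abs _ _
    _ ≤ ∑ _j : Fin (k + 1), s * maxMinor w := by
        refine Finset.sum_le_sum fun j _ => ?_
        rw [abs_mul, abs_mul, abs_pow, abs_neg, abs_one, one_pow, one_mul]
        gcongr
        exacts [hv _, abs_det_submatrix_le_maxMinor w _]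
    _ = (k + 1) * s * maxMinor w := by
        rw [Finset.sum_const, Finset.card_univ, Fintype.card_fin, nsmul_eq_mul]
        push_cast
        ring

lemma det_mul_vecMul_eq_dotProduct_cramer (w : Matrix κ ι ℝ) (I : κ → ι) (c : κ → ℝ) (i : ι) :
    (w.submatrix id I).det * (c ᵥ* w) i =
      (c ᵥ* w.submatrix id I) ⬝ᵥ cramer (w.submatrix id I) (w.col i) := by
  rw [← dotProduct_mulVec, mulVec_cramer, dotProduct_smul]
  rfl

lemma abs_cramer_submatrix_le_maxMinor [Finite ι] (w : Matrix κ ι ℝ) (I : κ → ι) (i : ι) (r : κ) :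
    |cramer (w.submatrix id I) (w.col i) r| ≤ maxMinor w := by
  have hcol : (w.submatrix id I).updateCol r (w.col i) =
      w.submatrix id (Function.update I r i) := by
    ext r' l
    rcases eq_or_ne l r with rfl | hl
    · simp
    · simp [updateCol_ne hl, Function.update_of_ne hl]
  rw [cramer_apply, hcol]
  exact abs_det_submatrix_le_maxMinor w _

theorem exists_int_vecMul_lt_of_maxMinor_lt [Finite ι] {w : Matrix κ ι ℝ} (hw : 0 < maxMinor w)
    {s : ℝ} (hs : 0 < s) (h : maxMinor w < s ^ Fintype.card κ) :
    ∃ c : κ → ℤ, c ≠ 0 ∧ ∀ i, |((fun j => (c j : ℝ)) ᵥ* w) i| < Fintype.card κ * s := by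
  obtain ⟨I, hI⟩ := exists_abs_det_submatrix_eq_maxMinor hw
  have hdet : (w.submatrix id I).det ≠ 0 := abs_pos.1 (hI ▸ hw)
  obtain ⟨c, hc₀, hc⟩ := exists_int_norm_mulVec_lt (A := (w.submatrix id I)ᵀ)
    (by rwa [det_transpose]) hs (by rwa [det_transpose, hI])
  rw [mulVec_transpose, pi_norm_lt_iff hs] at hc
  have : Nonempty κ := not_isEmpty_iff.1 fun _ => hc₀ (Subsingleton.elim _ _)
  refine ⟨c, hc₀, fun i => lt_of_mul_lt_mul_left ?_ hw.le⟩
  set M := w.submatrix id I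
  set cr : κ → ℝ := fun j => (c j : ℝ)
  calc maxMinor w * |(cr ᵥ* w) i| = |∑ r, (cr ᵥ* M) r * cramer M (w.col i) r| := by
        rw [← hI, ← abs_mul, det_mul_vecMul_eq_dotProduct_cramer]
        rfl
    _ ≤ ∑ r, |(cr ᵥ* M) r * cramer M (w.col i) r| := Finset.abs_sum_le_sum_abs _ _
    _ < ∑ _r : κ, s * maxMinor w := by
        refine Finset.sum_lt_sum_of_nonempty Finset.univ_nonempty fun r _ => ?_
        rw [abs_mul]
        exact mul_lt_mul_of_lt_of_le_of_nonneg_of_pos (hc r)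
          (abs_cramer_submatrix_le_maxMinor w I i r) (abs_nonneg _) hw
    _ = maxMinor w * (Fintype.card κ * s) := by
        rw [Finset.sum_const, Finset.card_univ, nsmul_eq_mul]
        ring

end MaxMinor

end Minors

section Height

open Matrix

variable {ι κ : Type*} [Fintype ι] [Fintype κ]

/-- The value at `y` of the linear form with integer coefficients `v`. -/
noncomputable def evalForm (v : ι → ℤ) (y : ι → ℚ_[p]) : ℚ_[p] := ∑ i, (v i : ℚ_[p]) * y i

lemma norm_evalForm_le (v : ι → ℤ) (y : ι → ℚ_[p]) : ‖evalForm v y‖ ≤ ‖y‖ :=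
  IsUltrametricDist.norm_sum_le_of_forall_le_of_nonneg (norm_nonneg y) fun i _ => by
    rw [norm_mul]
    exact (mul_le_of_le_one_left (norm_nonneg _) (Padic.norm_int_le_one _)).trans
      (norm_le_pi_norm y i)

lemma evalForm_vecMul (c : κ → ℤ) (w : Matrix κ ι ℤ) (y : ι → ℚ_[p]) :
    evalForm (c ᵥ* w) y = evalForm c (w.map (Int.castRingHom ℚ_[p]) *ᵥ y) := by
  have hcast : (fun i => ((c ᵥ* w) i : ℚ_[p])) =
      (fun j => (c j : ℚ_[p])) ᵥ* w.map (Int.castRingHom ℚ_[p]) := by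
    ext i
    simp [vecMul, dotProduct]
  change (fun i => ((c ᵥ* w) i : ℚ_[p])) ⬝ᵥ y = _
  rw [hcast, ← dotProduct_mulVec]
  rfl

lemma norm_map_mulVec_le (A : Matrix κ ι ℤ) (β : ι → ℚ_[p]) :
    ‖A.map (Int.castRingHom ℚ_[p]) *ᵥ β‖ ≤ ‖β‖ :=
  (pi_norm_le_iff_of_nonneg (norm_nonneg β)).2 fun j => norm_evalForm_le (A j) β

/-- The `p`-adic height of the vector `(1, p⁻ᵀ β)`: the factor by which the relations modulo `p ^ T`
between the entries of `β` increase the covolume of `ℤ^κ`. -/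
noncomputable def padicHeight (T : ℕ) (β : κ → ℚ_[p]) : ℝ := max 1 ((p : ℝ) ^ T * ‖β‖)

lemma one_le_padicHeight (T : ℕ) (β : κ → ℚ_[p]) : 1 ≤ padicHeight T β := le_max_left _ _

lemma pow_mul_norm_le_padicHeight (T : ℕ) (β : κ → ℚ_[p]) (j : κ) :
    (p : ℝ) ^ T * ‖β j‖ ≤ padicHeight T β :=
  le_max_of_le_right (by gcongr; exact norm_le_pi_norm β j)

lemma padicHeight_le {T : ℕ} {β : κ → ℚ_[p]} {C : ℝ} (hC : 1 ≤ C)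
    (h : ∀ j, (p : ℝ) ^ T * ‖β j‖ ≤ C) : padicHeight T β ≤ C := by
  have hp : (0 : ℝ) < (p : ℝ) ^ T := pow_pos (zero_lt_one.trans (one_lt_prime p)) T
  refine max_le hC ?_
  rw [← le_div_iff₀' hp, pi_norm_le_iff_of_nonneg (by positivity)]
  exact fun j => (le_div_iff₀' hp).2 (h j)

lemma exists_padicHeight_eq_of_one_lt {T : ℕ} {β : κ → ℚ_[p]} (h : 1 < padicHeight T β) :
    ∃ j, ‖β j‖ = ‖β‖ ∧ padicHeight T β = (p : ℝ) ^ T * ‖β j‖ := by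
  have hmax : padicHeight T β = (p : ℝ) ^ T * ‖β‖ :=
    max_eq_right (le_of_not_ge fun hle => h.ne' (max_eq_left hle))
  have hne : Nonempty κ := by
    by_contra hemp
    rw [not_nonempty_iff] at hemp
    rw [hmax, Subsingleton.elim β 0, norm_zero, mul_zero] at h
    exact not_lt_of_ge zero_le_one h
  obtain ⟨j, hj⟩ := exists_eq_ciSup_of_finite (f := fun j => ‖β j‖)
  have hj' : ‖β j‖ = ‖β‖ := le_antisymm (norm_le_pi_norm β j) <|
    (pi_norm_le_iff_of_nonneg (norm_nonneg _)).2 fun i => hj ▸ le_ciSup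
      (f := fun j => ‖β j‖) (Set.finite_range _).bddAbove i
  exact ⟨j, hj', by rw [hmax, hj']⟩

lemma norm_det_mul_padicHeight_le [DecidableEq κ] (T : ℕ) (A : Matrix κ κ ℤ) (β : κ → ℚ_[p]) :
    ‖(A.det : ℚ_[p])‖ * padicHeight T β ≤ padicHeight T (A.map (Int.castRingHom ℚ_[p]) *ᵥ β) := by
  have hadj : (A.det : ℚ_[p]) • β = A.adjugate.map (Int.castRingHom ℚ_[p]) *ᵥ
      (A.map (Int.castRingHom ℚ_[p]) *ᵥ β) := by
    rw [mulVec_mulVec, ← Matrix.map_mul, adjugate_mul, smul_one_eq_diagonal,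
      diagonal_map (map_zero _)]
    ext j
    rw [mulVec_diagonal]
    rfl
  rw [padicHeight, mul_max_of_nonneg _ _ (norm_nonneg _), mul_one, mul_left_comm, ← norm_smul, hadj]
  exact max_le_max (Padic.norm_int_le_one _) (by gcongr; exact norm_map_mulVec_le _ _)

lemma exists_int_pow_mul_norm_add_le {z : ℚ_[p]} (hz : ‖z‖ ≤ 1) (e : ℕ) :
    ∃ r : ℤ, (p : ℝ) ^ e * ‖z + r‖ ≤ 1 := by
  have hp : (0 : ℝ) < (p : ℝ) ^ e := pow_pos (zero_lt_one.trans (one_lt_prime p)) e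
  obtain ⟨z, rfl⟩ : ∃ x : ℤ_[p], (x : ℚ_[p]) = z := ⟨⟨z, hz⟩, rfl⟩
  have happr := (PadicInt.norm_le_pow_iff_mem_span_pow _ e).2 (PadicInt.appr_spec e z)
  rw [_root_.zpow_neg, zpow_natCast, PadicInt.norm_def] at happr
  refine ⟨-(z.appr e : ℤ), ?_⟩
  rw [← le_div_iff₀' hp, one_div, Int.cast_neg, Int.cast_natCast, ← sub_eq_add_neg]
  simpa only [PadicInt.coe_sub, PadicInt.coe_natCast] using happr

lemma exists_padicHeight_eq_pow (T : ℕ) (β : κ → ℚ_[p]) :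
    ∃ e : ℕ, padicHeight T β = (p : ℝ) ^ e := by
  have hp := one_lt_prime p
  rcases (one_le_padicHeight T β).eq_or_lt with h | h
  · exact ⟨0, by rw [← h, pow_zero]⟩
  obtain ⟨j, -, hj⟩ := exists_padicHeight_eq_of_one_lt h
  have hβ : β j ≠ 0 := by
    rintro h0
    rw [hj, h0, norm_zero, mul_zero] at h
    exact not_lt_of_ge zero_le_one h
  have hzpow : padicHeight T β = (p : ℝ) ^ ((T : ℤ) - (β j).valuation) := by
    rw [hj, Padic.norm_eq_zpow_neg_valuation hβ, sub_eq_add_neg,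
      zpow_add₀ (zero_lt_one.trans hp).ne', zpow_natCast]
  lift (T : ℤ) - (β j).valuation to ℕ using ((one_lt_zpow_iff_right₀ hp).1 (hzpow ▸ h)).le with e
  exact ⟨e, by rw [hzpow, zpow_natCast]⟩

omit [Fact p.Prime] [Fintype ι] in
lemma updateCol_one_mulVec [DecidableEq κ] {R : Type*} [CommRing R] (j : κ) (c β : κ → R) :
    (1 : Matrix κ κ R).updateCol j c *ᵥ β = Function.update β j 0 + β j • c := by
  have hsplit : β = Function.update β j 0 + Pi.single j (β j) := by
    ext i
    rcases eq_or_ne i j with rfl | hi <;> simp [*]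
  have hzero : (1 : Matrix κ κ R).updateCol j c *ᵥ Function.update β j 0 =
      Function.update β j 0 := by
    ext i
    simp only [mulVec, dotProduct, updateCol_apply, Function.update_apply, Matrix.one_apply]
    rw [Finset.sum_eq_single i] <;> grind
  conv_lhs => rw [hsplit, mulVec_add, mulVec_single, hzero]
  congr 1
  ext i
  simp [mul_comm]

/-- Column operations clear `β` modulo `p ^ T`, using its largest entry as a pivot. -/
lemma exists_abs_det_eq_padicHeight [DecidableEq κ] (T : ℕ) (β : κ → ℚ_[p]) :
    ∃ A : Matrix κ κ ℤ, |(A.det : ℝ)| = padicHeight T β ∧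
      ∀ i, (p : ℝ) ^ T * ‖(A.map (Int.castRingHom ℚ_[p]) *ᵥ β) i‖ ≤ 1 := by
  have hp : (p : ℝ) ≠ 0 := by exact_mod_cast (Fact.out : p.Prime).ne_zero
  rcases (one_le_padicHeight T β).eq_or_lt with h | h
  · refine ⟨1, by simp [← h], fun i => h ▸ ?_⟩
    simpa using pow_mul_norm_le_padicHeight T β i
  obtain ⟨j, hmax, hj⟩ := exists_padicHeight_eq_of_one_lt h
  obtain ⟨e, he⟩ := exists_padicHeight_eq_pow T β
  have hβ : β j ≠ 0 := by
    rintro h0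
    rw [hj, h0, norm_zero, mul_zero] at h
    exact not_lt_of_ge zero_le_one h
  have hr (i : κ) : ∃ r : ℤ, (p : ℝ) ^ e * ‖β i / β j + r‖ ≤ 1 :=
    exists_int_pow_mul_norm_add_le
      (by rw [norm_div, hmax]; exact div_le_one_of_le₀ (norm_le_pi_norm β i) (norm_nonneg β)) e
  choose r hr using hr
  let c : κ → ℤ := Function.update r j ((p : ℤ) ^ e)
  refine ⟨(1 : Matrix κ κ ℤ).updateCol j c, ?_, fun i => ?_⟩
  · rw [← cramer_apply, cramer_one, he]
    simp [c]
  · have hc : (p : ℝ) ^ e * ‖Function.update β j 0 i / β j + c i‖ ≤ 1 := by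
      rcases eq_or_ne i j with rfl | hi
      · simp [c, hp]
      · simpa [c, hi] using hr i
    have hmap : ((1 : Matrix κ κ ℤ).updateCol j c).map (Int.castRingHom ℚ_[p]) =
        (1 : Matrix κ κ ℚ_[p]).updateCol j (fun i => (c i : ℚ_[p])) := by
      rw [map_updateCol, Matrix.map_one _ (map_zero _) (map_one _)]
      rfl
    calc (p : ℝ) ^ T * ‖(((1 : Matrix κ κ ℤ).updateCol j c).map (Int.castRingHom ℚ_[p]) *ᵥ β) i‖
        = (p : ℝ) ^ T * ‖β j * (Function.update β j 0 i / β j + c i)‖ := by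
          rw [hmap, updateCol_one_mulVec, mul_add, mul_div_cancel₀ _ hβ]
          rfl
      _ = (p : ℝ) ^ e * ‖Function.update β j 0 i / β j + c i‖ := by
          rw [norm_mul, ← mul_assoc, ← hj, he]
      _ ≤ 1 := hc

end Height

section Covolume

open Matrix

variable {ι κ : Type*} [Fintype ι] [DecidableEq ι] [Fintype κ] [DecidableEq κ]

/-- The covolume, up to constants, of the lattice of integer combinations of the rows of `w`, scaled
by the weights `a` at the real place and by `p ^ (-T)` along the form `y` at the place `p`. -/
noncomputable def weightedCovolume (a : ι → ℝ) (T : ℕ) (w : Matrix κ ι ℤ) (y : ι → ℚ_[p]) : ℝ :=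
  maxMinor (w.map (Int.castRingHom ℝ) * diagonal a) *
    padicHeight T (w.map (Int.castRingHom ℚ_[p]) *ᵥ y)

variable {a : ι → ℝ} {T : ℕ} {y : ι → ℚ_[p]}

lemma weightedCovolume_nonneg (w : Matrix κ ι ℤ) : 0 ≤ weightedCovolume a T w y :=
  mul_nonneg (maxMinor_nonneg _) (zero_le_one.trans (one_le_padicHeight _ _))

lemma weightedCovolume_of_isEmpty [IsEmpty κ] (w : Matrix κ ι ℤ) :
    weightedCovolume a T w y = 1 := by
  rw [weightedCovolume, maxMinor_of_isEmpty, padicHeight, Subsingleton.elim (_ *ᵥ y) 0]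
  simp

lemma maxMinor_intMatrix_mul (A : Matrix κ κ ℤ) (w : Matrix κ ι ℤ) :
    maxMinor ((A * w).map (Int.castRingHom ℝ) * diagonal a) =
      |(A.det : ℝ)| * maxMinor (w.map (Int.castRingHom ℝ) * diagonal a) := by
  rw [Matrix.map_mul, Matrix.mul_assoc, maxMinor_mul]
  congr 2
  exact ((Int.castRingHom ℝ).map_det A).symm

lemma maxMinor_pos_of_linearIndependent (ha : ∀ i, 0 < a i) {k : ℕ} {w : Matrix (Fin k) ι ℤ}
    (hw : LinearIndependent ℤ w.row) : 0 < maxMinor (w.map (Int.castRingHom ℝ) * diagonal a) := by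
  obtain ⟨I, hI⟩ := exists_det_submatrix_ne_zero hw
  have hdet : ((w.map (Int.castRingHom ℝ) * diagonal a).submatrix id I).det =
      (∏ j, a (I j)) * ((w.submatrix id I).det : ℝ) := by
    rw [← eq_intCast (Int.castRingHom ℝ), RingHom.map_det, ← det_mul_row]
    congr 1
    ext i j
    simp [mul_comm]
  refine (abs_pos.2 ?_).trans_le (abs_det_submatrix_le_maxMinor _ I)
  rw [hdet]
  exact mul_ne_zero (Finset.prod_ne_zero_iff.2 fun j _ => (ha _).ne') (by exact_mod_cast hI)

lemma weightedCovolume_le_mul {A : Matrix κ κ ℤ} (hA : A.det ≠ 0) (w : Matrix κ ι ℤ) :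
    weightedCovolume a T w y ≤ weightedCovolume a T (A * w) y := by
  rw [weightedCovolume, weightedCovolume, maxMinor_intMatrix_mul]
  set ν := maxMinor (w.map (Int.castRingHom ℝ) * diagonal a)
  have hν : 0 ≤ ν := maxMinor_nonneg _
  set β := w.map (Int.castRingHom ℚ_[p]) *ᵥ y
  have hβ := (zero_le_one.trans (one_le_padicHeight T β))
  calc ν * padicHeight T β
      ≤ (|(A.det : ℝ)| * ‖(A.det : ℚ_[p])‖) * (ν * padicHeight T β) :=
        le_mul_of_one_le_left (by positivity) (one_le_abs_mul_norm hA)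
    _ = |(A.det : ℝ)| * ν * (‖(A.det : ℚ_[p])‖ * padicHeight T β) := by ring
    _ ≤ |(A.det : ℝ)| * ν * padicHeight T (A.map (Int.castRingHom ℚ_[p]) *ᵥ β) := by
        gcongr
        exact norm_det_mul_padicHeight_le T A β
    _ = |(A.det : ℝ)| * ν * padicHeight T ((A * w).map (Int.castRingHom ℚ_[p]) *ᵥ y) := by
        rw [Matrix.map_mul, ← mulVec_mulVec]

lemma weightedCovolume_cons_le {k : ℕ} (w : Matrix (Fin k) ι ℤ) {v : ι → ℤ} {s : ℝ} (hs : 0 ≤ s)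
    (ha : ∀ i, 0 < a i) (hv : ∀ i, |(v i : ℝ)| * a i ≤ s) (hy : (p : ℝ) ^ T * ‖evalForm v y‖ ≤ 1) :
    weightedCovolume a T (Matrix.of (Fin.cons v w)) y ≤ (k + 1) * s * weightedCovolume a T w y := by
  have hreal : (Matrix.of (Fin.cons v w)).map (Int.castRingHom ℝ) * diagonal a =
      Matrix.of (Fin.cons (fun i => (v i : ℝ) * a i)
        (w.map (Int.castRingHom ℝ) * diagonal a)) := by
    ext j i
    rw [mul_diagonal]
    refine Fin.cases rfl (fun j => ?_) j
    exact (mul_diagonal _ _ _ _).symm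
  have hminor := maxMinor_cons_le (w.map (Int.castRingHom ℝ) * diagonal a) hs
    (v := fun i => (v i : ℝ) * a i) fun i => by rw [abs_mul, abs_of_pos (ha i)]; exact hv i
  have hheight : padicHeight T ((Matrix.of (Fin.cons v w)).map (Int.castRingHom ℚ_[p]) *ᵥ y) ≤
      padicHeight T (w.map (Int.castRingHom ℚ_[p]) *ᵥ y) := by
    refine padicHeight_le (one_le_padicHeight _ _) fun j => ?_
    refine Fin.cases (hy.trans (one_le_padicHeight _ _)) (fun j => ?_) j
    exact pow_mul_norm_le_padicHeight T (w.map (Int.castRingHom ℚ_[p]) *ᵥ y) j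
  rw [weightedCovolume, weightedCovolume, hreal, ← mul_assoc]
  have := maxMinor_nonneg (w.map (Int.castRingHom ℝ) * diagonal a)
  have := one_le_padicHeight T ((Matrix.of (Fin.cons v w)).map (Int.castRingHom ℚ_[p]) *ᵥ y)
  gcongr

lemma div_natCast_pow_le {σ : ℝ} (hσ : 0 ≤ σ) (hσ1 : σ ≤ 1) {k m : ℕ} (hkm : k ≤ m) :
    (σ / m) ^ m ≤ (σ / k) ^ k := by
  rcases k.eq_zero_or_pos with rfl | hk
  · rw [pow_zero]
    rcases m.eq_zero_or_pos with rfl | hm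
    · rw [pow_zero]
    · exact pow_le_one₀ (by positivity)
        (div_le_one_of_le₀ (hσ1.trans (by exact_mod_cast hm)) m.cast_nonneg)
  · have hm : (1 : ℝ) ≤ m := by exact_mod_cast hk.trans_le hkm
    calc (σ / m) ^ m ≤ (σ / m) ^ k := pow_le_pow_of_le_one (by positivity)
          (div_le_one_of_le₀ (hσ1.trans hm) m.cast_nonneg) hkm
      _ ≤ (σ / k) ^ k := by gcongr

lemma pow_div_le_maxMinor {σ : ℝ} (ha : ∀ i, 0 < a i) {k : ℕ} {w : Matrix (Fin k) ι ℤ}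
    (hw : LinearIndependent ℤ w.row) (hσ : 0 < σ)
    (h : ∀ v : ι → ℤ, v ≠ 0 → (p : ℝ) ^ T * ‖evalForm v y‖ ≤ 1 → ∃ i, σ ≤ |(v i : ℝ)| * a i)
    (hwy : ∀ j, (p : ℝ) ^ T * ‖(w.map (Int.castRingHom ℚ_[p]) *ᵥ y) j‖ ≤ 1) :
    (σ / k) ^ k ≤ maxMinor (w.map (Int.castRingHom ℝ) * diagonal a) := by
  rcases k.eq_zero_or_pos with rfl | hk
  · simp [maxMinor_of_isEmpty]
  have hk : (0 : ℝ) < k := by exact_mod_cast hk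
  by_contra! hlt
  obtain ⟨c, hc, hsmall⟩ := exists_int_vecMul_lt_of_maxMinor_lt
    (maxMinor_pos_of_linearIndependent ha hw) (div_pos hσ hk) (by rwa [Fintype.card_fin])
  have hcw : c ᵥ* w ≠ 0 := by
    rw [Ne, ← zero_vecMul w]
    exact fun h0 => hc (vecMul_injective_iff.2 hw h0)
  have hy : (p : ℝ) ^ T * ‖evalForm (c ᵥ* w) y‖ ≤ 1 := by
    have hp : (0 : ℝ) < (p : ℝ) ^ T := pow_pos (zero_lt_one.trans (one_lt_prime p)) T
    rw [evalForm_vecMul, ← le_div_iff₀' hp]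
    refine (norm_evalForm_le _ _).trans ((pi_norm_le_iff_of_nonneg (by positivity)).2 fun j => ?_)
    exact (le_div_iff₀' hp).2 (hwy j)
  obtain ⟨i, hi⟩ := h _ hcw hy
  have hcast : ((fun j => (c j : ℝ)) ᵥ* (w.map (Int.castRingHom ℝ) * diagonal a)) i =
      ((c ᵥ* w) i : ℝ) * a i := by
    rw [← vecMul_vecMul, vecMul_diagonal]
    simp [vecMul, dotProduct]
  have hlt := hsmall i
  rw [hcast, abs_mul, abs_of_pos (ha i), Fintype.card_fin, mul_div_cancel₀ _ hk.ne'] at hlt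
  exact not_lt_of_ge hi hlt

lemma pow_div_card_le_weightedCovolume {σ : ℝ} (ha : ∀ i, 0 < a i) {k : ℕ}
    {w : Matrix (Fin k) ι ℤ} (hw : LinearIndependent ℤ w.row) (hσ : 0 < σ) (hσ1 : σ ≤ 1)
    (h : ∀ v : ι → ℤ, v ≠ 0 → (p : ℝ) ^ T * ‖evalForm v y‖ ≤ 1 → ∃ i, σ ≤ |(v i : ℝ)| * a i) :
    (σ / Fintype.card ι) ^ Fintype.card ι ≤ weightedCovolume a T w y := by
  have hk : k ≤ Fintype.card ι := by
    simpa using hw.fintype_card_le_finrank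
  obtain ⟨A, hdet, hA⟩ := exists_abs_det_eq_padicHeight T (w.map (Int.castRingHom ℚ_[p]) *ᵥ y)
  have hA0 : A.det ≠ 0 := by
    rintro h0
    rw [h0, Int.cast_zero, abs_zero] at hdet
    exact (one_le_padicHeight _ _).not_gt (hdet ▸ zero_lt_one)
  calc (σ / Fintype.card ι) ^ Fintype.card ι
      ≤ (σ / k) ^ k := div_natCast_pow_le hσ.le hσ1 hk
    _ ≤ maxMinor ((A * w).map (Int.castRingHom ℝ) * diagonal a) :=
        pow_div_le_maxMinor ha (linearIndependent_row_mul hw hA0) hσ h fun j => by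
          rw [Matrix.map_mul, ← mulVec_mulVec]
          exact hA j
    _ = weightedCovolume a T w y := by
        rw [maxMinor_intMatrix_mul, hdet, mul_comm, weightedCovolume]

end Covolume

section RationalSubspace

open Matrix Module

variable {ι κ : Type*}

/-- The inclusion of `ℤ^ι` in `ℚ^ι`. -/
def intCastLinearMap (ι : Type*) : (ι → ℤ) →ₗ[ℤ] (ι → ℚ) := (Algebra.linearMap ℤ ℚ).compLeft ι

lemma intCastLinearMap_injective : Function.Injective (intCastLinearMap ι) :=
  fun _ _ h => funext fun i => Int.cast_injective (congrFun h i)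

lemma linearIndependent_intCastLinearMap_iff {w : κ → ι → ℤ} :
    LinearIndependent ℚ (fun j => intCastLinearMap ι (w j)) ↔ LinearIndependent ℤ w := by
  rw [← LinearIndependent.iff_fractionRing ℤ ℚ]
  exact (intCastLinearMap ι).linearIndependent_iff
    (LinearMap.ker_eq_bot.2 intCastLinearMap_injective)

/-- The lattice of integer points of the rational subspace `W`. -/
def integerPoints (W : Submodule ℚ (ι → ℚ)) : Submodule ℤ (ι → ℤ) :=
  (W.restrictScalars ℤ).comap (intCastLinearMap ι)

lemma integerPoints_mono {W W' : Submodule ℚ (ι → ℚ)} (h : W ≤ W') :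
    integerPoints W ≤ integerPoints W' := fun _ hv => h hv

lemma mem_integerPoints_sup_span (W : Submodule ℚ (ι → ℚ)) (v : ι → ℤ) :
    v ∈ integerPoints (W ⊔ Submodule.span ℚ {intCastLinearMap ι v}) :=
  (le_sup_right : _ ≤ W ⊔ _) (Submodule.mem_span_singleton_self _)

section Finite

variable [Finite ι]

lemma span_image_integerPoints (W : Submodule ℚ (ι → ℚ)) :
    Submodule.span ℚ (intCastLinearMap ι '' integerPoints W) = W := by
  refine le_antisymm (Submodule.span_le.2 (Set.image_subset_iff.2 fun _ hv => hv)) fun w hw => ?_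
  obtain ⟨D, hD⟩ := IsLocalization.exist_integer_multiples_of_finite (nonZeroDivisors ℤ) w
  choose v hv using hD
  have hcast : intCastLinearMap ι v = ((D : ℤ) : ℚ) • w := by
    ext i
    exact (hv i).trans (zsmul_eq_mul _ _)
  have hD0 : ((D : ℤ) : ℚ) ≠ 0 := by exact_mod_cast nonZeroDivisors.coe_ne_zero D
  rw [← inv_smul_smul₀ hD0 w, ← hcast]
  refine Submodule.smul_mem _ _ (Submodule.subset_span ⟨v, ?_, rfl⟩)
  change intCastLinearMap ι v ∈ W
  exact hcast ▸ W.smul_mem _ hw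

lemma finrank_integerPoints (W : Submodule ℚ (ι → ℚ)) :
    finrank ℤ (integerPoints W) = finrank ℚ W := by
  let B := finBasis ℤ (integerPoints W)
  have hspan : Submodule.span ℤ (Set.range fun j => (B j : ι → ℤ)) = integerPoints W := by
    rw [Set.range_comp' Subtype.val B]
    change Submodule.span ℤ ((integerPoints W).subtype '' _) = _
    rw [Submodule.span_image, B.span_eq, Submodule.map_top, Submodule.range_subtype]
  have hspan' : Submodule.span ℚ (Set.range fun j => intCastLinearMap ι (B j)) = W := by
    rw [Set.range_comp' (intCastLinearMap ι) fun j => (B j : ι → ℤ),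
      ← Submodule.span_span_of_tower ℤ, Submodule.span_image, hspan]
    exact span_image_integerPoints W
  have hli : LinearIndependent ℚ fun j => intCastLinearMap ι (B j) :=
    linearIndependent_intCastLinearMap_iff.2
      (B.linearIndependent.map' (integerPoints W).subtype (Submodule.ker_subtype _))
  rw [← hspan', finrank_span_eq_card hli, hspan', Fintype.card_fin]

/-- A matrix whose rows form a basis of the lattice of integer points of `W`. -/
noncomputable def integerBasis (W : Submodule ℚ (ι → ℚ)) : Matrix (Fin (finrank ℚ W)) ι ℤ :=
  Matrix.of fun j => (finBasisOfFinrankEq ℤ (integerPoints W) (finrank_integerPoints W) j : ι → ℤ)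

lemma integerBasis_mem (W : Submodule ℚ (ι → ℚ)) (j : Fin (finrank ℚ W)) :
    integerBasis W j ∈ integerPoints W :=
  (finBasisOfFinrankEq ℤ (integerPoints W) (finrank_integerPoints W) j).2

lemma linearIndependent_integerBasis (W : Submodule ℚ (ι → ℚ)) :
    LinearIndependent ℤ (integerBasis W).row :=
  (finBasisOfFinrankEq ℤ _ (finrank_integerPoints W)).linearIndependent.map'
    (integerPoints W).subtype (Submodule.ker_subtype _)

lemma exists_mul_integerBasis_eq {W : Submodule ℚ (ι → ℚ)} {w : Matrix κ ι ℤ}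
    (hw : ∀ j, w j ∈ integerPoints W) : ∃ A, A * integerBasis W = w := by
  let B := finBasisOfFinrankEq ℤ (integerPoints W) (finrank_integerPoints W)
  refine ⟨Matrix.of fun j => B.repr ⟨w j, hw j⟩, ?_⟩
  ext j i
  have hsum := congrArg (fun v : integerPoints W => (v : ι → ℤ) i) (B.sum_repr ⟨w j, hw j⟩)
  simp only [Submodule.coe_sum, Finset.sum_apply, Submodule.coe_smul, Pi.smul_apply,
    smul_eq_mul] at hsum
  exact hsum

lemma linearIndependent_cons_integerBasis {W : Submodule ℚ (ι → ℚ)} {v : ι → ℤ}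
    (hv : v ∉ integerPoints W) :
    LinearIndependent ℤ (Fin.cons v (integerBasis W) : Fin (finrank ℚ W + 1) → ι → ℤ) := by
  have hcons : (fun j => intCastLinearMap ι
      ((Fin.cons v (integerBasis W) : Fin (finrank ℚ W + 1) → ι → ℤ) j)) =
      Fin.cons (intCastLinearMap ι v) fun j => intCastLinearMap ι (integerBasis W j) :=
    funext fun j => Fin.cases rfl (fun _ => rfl) j
  rw [← linearIndependent_intCastLinearMap_iff, hcons, linearIndependent_finCons]
  refine ⟨linearIndependent_intCastLinearMap_iff.2 (linearIndependent_integerBasis W),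
    fun h => hv ((Submodule.span_le (p := W)).2 ?_ h)⟩
  exact Set.range_subset_iff.2 (integerBasis_mem W)

lemma finrank_sup_span_singleton {W : Submodule ℚ (ι → ℚ)} {x : ι → ℚ} (hx : x ∉ W) :
    finrank ℚ ↥(W ⊔ Submodule.span ℚ {x}) = finrank ℚ W + 1 := by
  have hx0 : x ≠ 0 := fun h => hx (h ▸ W.zero_mem)
  have hsum := Submodule.finrank_sup_add_finrank_inf_eq W (Submodule.span ℚ {x})
  rwa [(Submodule.disjoint_span_singleton_of_notMem hx).eq_bot, finrank_bot, add_zero,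
    finrank_span_singleton hx0] at hsum

end Finite

variable [Fintype ι] [DecidableEq ι] {a : ι → ℝ} {T : ℕ} {y : ι → ℚ_[p]}

/-- The weighted covolume of the lattice of integer points of the rational subspace `W`. -/
noncomputable def subspaceCovolume (a : ι → ℝ) (T : ℕ) (W : Submodule ℚ (ι → ℚ))
    (y : ι → ℚ_[p]) : ℝ := weightedCovolume a T (integerBasis W) y

lemma subspaceCovolume_le {W : Submodule ℚ (ι → ℚ)} {k : ℕ} (hk : finrank ℚ W = k)
    {w : Matrix (Fin k) ι ℤ} (hw : LinearIndependent ℤ w.row) (hW : ∀ j, w j ∈ integerPoints W) :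
    subspaceCovolume a T W y ≤ weightedCovolume a T w y := by
  subst hk
  obtain ⟨A, rfl⟩ := exists_mul_integerBasis_eq hW
  exact weightedCovolume_le_mul (det_ne_zero_of_linearIndependent_row_mul hw) _

lemma subspaceCovolume_sup_span_le (ha : ∀ i, 0 < a i) {W : Submodule ℚ (ι → ℚ)} {v : ι → ℤ}
    (hv : v ∉ integerPoints W) {s : ℝ} (hs : 0 ≤ s) (hvs : ∀ i, |(v i : ℝ)| * a i ≤ s)
    (hy : (p : ℝ) ^ T * ‖evalForm v y‖ ≤ 1) :
    subspaceCovolume a T (W ⊔ Submodule.span ℚ {intCastLinearMap ι v}) y ≤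
      Fintype.card ι * s * subspaceCovolume a T W y := by
  have hrank := finrank_sup_span_singleton hv
  have hcard : (finrank ℚ W + 1 : ℝ) ≤ Fintype.card ι := by
    have := Submodule.finrank_le (W ⊔ Submodule.span ℚ {intCastLinearMap ι v})
    rw [hrank, finrank_fintype_fun_eq_card] at this
    exact_mod_cast this
  calc subspaceCovolume a T (W ⊔ Submodule.span ℚ {intCastLinearMap ι v}) y
      ≤ weightedCovolume a T (Matrix.of (Fin.cons v (integerBasis W))) y :=
        subspaceCovolume_le hrank (linearIndependent_cons_integerBasis hv) fun j =>
          Fin.cases (mem_integerPoints_sup_span W v)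
            (fun j => integerPoints_mono le_sup_left (integerBasis_mem W j)) j
    _ ≤ (finrank ℚ W + 1) * s * weightedCovolume a T (integerBasis W) y :=
        weightedCovolume_cons_le _ hs ha hvs hy
    _ ≤ Fintype.card ι * s * subspaceCovolume a T W y :=
        mul_le_mul_of_nonneg_right (by gcongr) (weightedCovolume_nonneg _)

lemma subspaceCovolume_bot : subspaceCovolume a T ⊥ y = 1 := by
  have : IsEmpty (Fin (finrank ℚ (⊥ : Submodule ℚ (ι → ℚ)))) := by
    rw [finrank_bot]
    infer_instance
  exact weightedCovolume_of_isEmpty _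

end RationalSubspace

section MarkedFlag

lemma exists_maximal_notMem_of_isChain {P : Type*} [PartialOrder P] [OrderBot P] {F : Finset P}
    (hF : IsChain (· ≤ ·) (F : Set P)) {Q : P → Prop} (hbot : Q ⊥) :
    ∃ a, Q a ∧ (a = ⊥ ∨ a ∈ F) ∧ ∀ r ∈ F, r ≤ a ∨ (a ≤ r ∧ ¬ Q r) := by
  classical
  have hbot' : ⊥ ∈ insert ⊥ (F.filter Q) := Finset.mem_insert_self _ _
  obtain ⟨a, ha⟩ := Finset.exists_maximal ⟨⊥, hbot'⟩
  have haF : a = ⊥ ∨ a ∈ F ∧ Q a := by simpa using ha.prop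
  refine ⟨a, haF.elim (· ▸ hbot) And.right, haF.imp_right And.left, fun r hr => ?_⟩
  have hcomp : r ≤ a ∨ a ≤ r := haF.elim (fun h => .inr (h ▸ bot_le)) fun h => hF.total hr h.1
  by_cases hQr : Q r
  · exact .inl (hcomp.elim id (ha.le_of_ge (by simp [hr, hQr])))
  · exact hcomp.imp_right (⟨·, hQr⟩)

lemma exists_le_abs_mul_of_isMarked {ι X : Type*} [Fintype ι] [DecidableEq ι] {a : ι → ℝ} {T : ℕ}
    {F : X → ι → ℚ_[p]} {ε ρ : ℝ} {x : X} (ha : ∀ i, 0 < a i) (hε : 0 < ε) (hερ : ε ≤ ρ)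
    (hρ : ρ ≤ 1) (h : IsMarked (fun W x => subspaceCovolume a T W (F x)) ε ρ Set.univ x)
    {v : ι → ℤ} (hv : v ≠ 0) (hvx : (p : ℝ) ^ T * ‖evalForm v (F x)‖ ≤ 1) :
    ∃ i, ε / (2 * Fintype.card ι) ≤ |(v i : ℝ)| * a i := by
  obtain ⟨S, -, hchain, hS, hmax⟩ := h
  have hbot : v ∉ integerPoints (⊥ : Submodule ℚ (ι → ℚ)) := fun h =>
    hv (intCastLinearMap_injective (((Submodule.mem_bot ℚ).1 h).trans (map_zero _).symm))
  obtain ⟨W, hvW, hW, hcomp⟩ := exists_maximal_notMem_of_isChain hchain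
    (Q := fun W => v ∉ integerPoints W) hbot
  have hW1 : subspaceCovolume a T W (F x) ≤ 1 := by
    rcases hW with rfl | hW
    exacts [subspaceCovolume_bot.le, (hS W hW).2.le.trans hρ]
  by_contra! hsmall
  have hcard : (0 : ℝ) < Fintype.card ι := by
    have : Nonempty ι := (Function.ne_iff.1 hv).nonempty
    exact_mod_cast Fintype.card_pos
  set W' := W ⊔ Submodule.span ℚ {intCastLinearMap ι v}
  have hlt : subspaceCovolume a T W' (F x) < ε := calc
    subspaceCovolume a T W' (F x)
        ≤ Fintype.card ι * (ε / (2 * Fintype.card ι)) * subspaceCovolume a T W (F x) :=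
          subspaceCovolume_sup_span_le ha hvW (by positivity) (fun i => (hsmall i).le) hvx
    _ = ε / 2 * subspaceCovolume a T W (F x) := by field_simp
    _ ≤ ε / 2 * 1 := by gcongr
    _ < ε := by linarith
  have hW'S : W' ∉ S := fun h => hlt.not_ge (hS W' h).1
  refine (hlt.trans_le hερ).not_ge (hmax W' (Set.mem_univ _) hW'S fun r hr => ?_)
  rcases hcomp r hr with hle | ⟨hge, hvr⟩
  · exact .inr (hle.trans le_sup_left)
  · exact .inl (sup_le hge ((Submodule.span_singleton_le_iff_mem _ _).2 (not_not.1 hvr)))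

end MarkedFlag

section QuantitativeNondivergence

open Matrix Module

variable {ι : Type*} [Fintype ι] {a : ι → ℝ} {T : ℕ}

lemma continuous_subspaceCovolume [DecidableEq ι] (W : Submodule ℚ (ι → ℚ)) :
    Continuous (subspaceCovolume (p := p) a T W) :=
  continuous_const.mul <| continuous_const.max <| continuous_const.mul <| continuous_norm.comp <|
    continuous_const.matrix_mulVec continuous_id

variable {E : Type*} [NormedAddCommGroup E] [MeasurableSpace E] {μ : Measure E}
  {F : E → ι → ℚ_[p]} {x₀ : E} {j₀ K : ℕ}

lemma measure_subspaceCovolume_lt_le [DecidableEq ι] (ha : ∀ i, 0 < a i)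
    (hgood : ∀ v : ι → ℤ, IsDiscretelyGood p μ (fun x => evalForm v (F x)) K x₀ j₀) {x : E}
    (hx : x ∈ padicBall p x₀ j₀) {j : ℕ} (hj : j₀ ≤ j) {W : Submodule ℚ (ι → ℚ)} {y₁ : E}
    (hy₁ : y₁ ∈ padicBall p x j) {ρ : ℝ} (hρ : 0 ≤ ρ)
    (hle : ρ ≤ subspaceCovolume a T W (F y₁)) (L : ℕ) :
    μ {y ∈ padicBall p x j | subspaceCovolume a T W (F y) < ρ * ((p : ℝ)⁻¹ ^ L) ^ K} ≤
      K / (p ^ L : ℕ) * μ (padicBall p x j) := by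
  have hp := (Fact.out : p.Prime)
  set q := ((p : ℝ)⁻¹ ^ L) ^ K
  have : 0 ≤ q := by positivity
  have hq1 : q ≤ 1 :=
    pow_le_one₀ (by positivity) (pow_le_one₀ inv_prime_pos.le inv_prime_lt_one.le)
  set ν := maxMinor ((integerBasis W).map (Int.castRingHom ℝ) * diagonal a)
  have hν : 0 < ν := maxMinor_pos_of_linearIndependent ha (linearIndependent_integerBasis W)
  let β (y : E) := (integerBasis W).map (Int.castRingHom ℚ_[p]) *ᵥ F y
  change ρ ≤ ν * padicHeight T (β y₁) at hle
  change μ {y ∈ padicBall p x j | ν * padicHeight T (β y) < ρ * q} ≤ _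
  rcases (one_le_padicHeight T (β y₁)).eq_or_lt with hone | hlt
  · have hempty : {y ∈ padicBall p x j | ν * padicHeight T (β y) < ρ * q} = ∅ := by
      refine Set.eq_empty_iff_forall_notMem.2 fun y hy => hy.2.not_ge ?_
      calc ρ * q ≤ ν * 1 := by
            rw [← hone] at hle
            exact (mul_le_of_le_one_right hρ hq1).trans hle
        _ ≤ ν * padicHeight T (β y) := by
            gcongr
            exact one_le_padicHeight _ _
    rw [hempty, measure_empty]
    exact zero_le
  · obtain ⟨i, -, hi⟩ := exists_padicHeight_eq_of_one_lt hlt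
    have hsub : {y ∈ padicBall p x j | ν * padicHeight T (β y) < ρ * q} ⊆
        {y ∈ padicBall p x j | ‖β y i‖ < q * ‖β y₁ i‖} := by
      rintro y ⟨hy, hsmall⟩
      have hp0 : (0 : ℝ) < ν * (p : ℝ) ^ T := by
        have : (0 : ℝ) < p := by exact_mod_cast hp.pos
        positivity
      refine ⟨hy, lt_of_mul_lt_mul_left ?_ hp0.le⟩
      calc ν * (p : ℝ) ^ T * ‖β y i‖ = ν * ((p : ℝ) ^ T * ‖β y i‖) := mul_assoc _ _ _
        _ ≤ ν * padicHeight T (β y) := by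
            gcongr
            exact pow_mul_norm_le_padicHeight T (β y) i
        _ < ρ * q := hsmall
        _ ≤ ν * padicHeight T (β y₁) * q := by gcongr
        _ = ν * (p : ℝ) ^ T * (q * ‖β y₁ i‖) := by rw [hi]; ring
    refine (measure_mono hsub).trans ?_
    rw [← ENNReal.mul_div_right_comm, ENNReal.le_div_iff_mul_le
      (.inl (by exact_mod_cast pow_ne_zero L hp.ne_zero)) (.inl (ENNReal.natCast_ne_top _)),
      mul_comm]
    exact hgood (integerBasis W i) x hx j hj y₁ hy₁ L

variable [IsUltrametricDist E] [SecondCountableTopology E] [OpensMeasurableSpace E]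

theorem measure_exists_int_lt_le (ha : ∀ i, 0 < a i)
    (hgood : ∀ v : ι → ℤ, IsDiscretelyGood p μ (fun x => evalForm v (F x)) K x₀ j₀)
    (hF : ContinuousOn F (padicBall p x₀ j₀)) {D : ℝ≥0∞}
    (hD : ∀ (x : E) (j : ℕ), μ (padicBall p x j) ≤ D * μ (padicBall p x (j + 1)))
    {σ : ℝ} (hσ : 0 < σ) (hσ1 : σ ≤ 1)
    (hσx₀ : ∀ v : ι → ℤ, v ≠ 0 → (p : ℝ) ^ T * ‖evalForm v (F x₀)‖ ≤ 1 →
      ∃ i, σ ≤ |(v i : ℝ)| * a i) (L : ℕ) :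
    μ {x ∈ padicBall p x₀ j₀ | ∃ v : ι → ℤ, v ≠ 0 ∧ (p : ℝ) ^ T * ‖evalForm v (F x)‖ ≤ 1 ∧
        ∀ i, |(v i : ℝ)| * a i < (σ / Fintype.card ι) ^ Fintype.card ι * ((p : ℝ)⁻¹ ^ L) ^ K /
          (2 * Fintype.card ι)} ≤
      markedConst D (Fintype.card ι + 1) * (K / (p ^ L : ℕ)) * μ (padicBall p x₀ j₀) := by
  classical
  rcases isEmpty_or_nonempty ι with hι | hι
  · simp [Subsingleton.elim _ (0 : ι → ℤ)]
  have hm : (1 : ℝ) ≤ Fintype.card ι := by exact_mod_cast Fintype.card_pos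
  set ρ := (σ / Fintype.card ι) ^ Fintype.card ι
  have hρ : 0 < ρ := by positivity
  have hρ1 : ρ ≤ 1 := pow_le_one₀ (by positivity) (div_le_one_of_le₀ (hσ1.trans hm) (by positivity))
  set q := ((p : ℝ)⁻¹ ^ L) ^ K
  have hq : 0 < q := pow_pos (pow_pos inv_prime_pos L) K
  have hq1 : q ≤ 1 :=
    pow_le_one₀ (by positivity) (pow_le_one₀ inv_prime_pos.le inv_prime_lt_one.le)
  have hsub : {x ∈ padicBall p x₀ j₀ | ∃ v : ι → ℤ, v ≠ 0 ∧
      (p : ℝ) ^ T * ‖evalForm v (F x)‖ ≤ 1 ∧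
        ∀ i, |(v i : ℝ)| * a i < ρ * q / (2 * Fintype.card ι)} ⊆
      {x ∈ padicBall p x₀ j₀ |
        ¬ IsMarked (fun W x => subspaceCovolume a T W (F x)) (ρ * q) ρ Set.univ x} := by
    rintro x ⟨hx, v, hv, hvx, hsmall⟩
    refine ⟨hx, fun hmarked => ?_⟩
    obtain ⟨i, hi⟩ := exists_le_abs_mul_of_isMarked ha (mul_pos hρ hq)
      (mul_le_of_le_one_right hρ.le hq1) hρ1 hmarked hv hvx
    exact (hsmall i).not_ge hi
  have hmeas := measure_not_isMarked_le (P := Submodule ℚ (ι → ℚ)) (rk := fun W => finrank ℚ W)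
    (ψ := fun W x => subspaceCovolume a T W (F x)) (P' := Set.univ) (ε := ρ * q)
    (fun _ _ h => Submodule.finrank_lt_finrank_of_lt h) hD
    (fun W x hx hlt => exists_padicBall_subset <|
      ((continuous_subspaceCovolume W).continuousAt.comp
        (hF.continuousAt ((isOpen_padicBall x₀ j₀).mem_nhds hx))).eventually_lt_const hlt)
    (fun W x hx j hj ⟨y₁, hy₁, hle⟩ =>
      measure_subspaceCovolume_lt_le ha hgood hx hj hy₁ hρ.le hle L)
    (Finset.range (Fintype.card ι + 1))
    (fun W _ => Finset.mem_range_succ_iff.2 <|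
      (Submodule.finrank_le W).trans_eq (finrank_fintype_fun_eq_card ℚ))
    (self_mem_padicBall x₀ j₀) le_rfl
    (fun W _ => ⟨x₀, self_mem_padicBall x₀ j₀,
      pow_div_card_le_weightedCovolume ha (linearIndependent_integerBasis W) hσ hσ1 hσx₀⟩)
  rw [Finset.card_range] at hmeas
  exact (measure_mono hsub).trans hmeas

end QuantitativeNondivergence

section MultiplicativeApproximation

open Filter

variable {ι : Type*} [Fintype ι]

/-- The product `Π_+` of the absolute values of the nonzero entries of an integer vector. -/
noncomputable def plusProd (v : ι → ℤ) : ℝ := ∏ i, max |(v i : ℝ)| 1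

lemma one_le_plusProd (v : ι → ℤ) : 1 ≤ plusProd v :=
  Finset.one_le_prod fun _ _ => le_max_right _ _

lemma abs_le_plusProd (v : ι → ℤ) (i : ι) : |(v i : ℝ)| ≤ plusProd v :=
  Finset.le_prod_max_one (Finset.mem_univ i) fun i => |(v i : ℝ)|

lemma finite_setOf_plusProd_le (C : ℝ) : {v : ι → ℤ | plusProd v ≤ C}.Finite := by
  classical
  refine (Set.finite_Icc (fun _ : ι => -⌈C⌉) (fun _ => ⌈C⌉)).subset fun v hv => ?_
  have habs (i : ι) : |v i| ≤ ⌈C⌉ := by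
    exact_mod_cast ((abs_le_plusProd v i).trans hv).trans (Int.le_ceil C)
  exact ⟨fun i => (abs_le.1 (habs i)).1, fun i => (abs_le.1 (habs i)).2⟩

/-- The integer vectors at which the linear form given by `y` beats the trivial bound `Π_+⁻¹` by
a power `Π_+^{-ε}`. -/
def multApproximations (ε : ℝ) (y : ι → ℚ_[p]) : Set (ι → ℤ) :=
  {v | ‖evalForm v y‖ ≤ plusProd v ^ (-(1 + ε))}

lemma piPlusZ_eq_plusProd {n : ℕ} (q₀ : ℤ) (q : Fin n → ℤ) :
    piPlusZ q₀ q = plusProd (Fin.cons q₀ q : Fin (n + 1) → ℤ) := by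
  have hfactor (z : ℤ) : (if z = 0 then 1 else |(z : ℝ)|) = max |(z : ℝ)| 1 := by
    split_ifs with hz
    · simp [hz]
    · exact (max_eq_left (by exact_mod_cast Int.one_le_abs hz)).symm
  simp only [piPlusZ, plusProd, hfactor, Fin.prod_univ_succ, Fin.cons_zero, Fin.cons_succ]

lemma isVWMA_iff {n : ℕ} (y : Fin n → ℚ_[p]) :
    IsVWMA p y ↔
      ∃ ε > 0, (multApproximations ε (Fin.cons 1 y : Fin (n + 1) → ℚ_[p])).Infinite := by
  refine exists_congr fun ε => and_congr_right fun _ => ?_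
  rw [← Set.infinite_image_iff (Fin.consEquiv fun _ => ℤ).injective.injOn,
    Equiv.image_eq_preimage_symm]
  refine iff_of_eq (congrArg Set.Infinite (Set.ext fun v => ?_))
  simp [multApproximations, evalForm, piPlusZ_eq_plusProd, Fin.sum_univ_succ, Fin.consEquiv,
    Fin.tail]

lemma evalForm_ne_zero_of_finite {y : ι → ℚ_[p]} {ε : ℝ} (h : (multApproximations ε y).Finite)
    {v : ι → ℤ} (hv : v ≠ 0) : evalForm v y ≠ 0 := by
  intro hzero
  refine Set.infinite_of_injective_forall_mem (smul_left_injective ℤ hv) (fun k => ?_) h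
  have hsmul : evalForm (k • v) y = k * evalForm v y := by
    simp [evalForm, Finset.mul_sum, mul_assoc]
  have := one_le_plusProd (k • v)
  simp only [multApproximations, Set.mem_ofPred_eq, hsmul, hzero, mul_zero, norm_zero]
  positivity

/-- The `p`-adic value of the integer vector `v` at `y` is at most `p^{-Σ t}`, and contracting its
`i`-th coordinate by `p^{t i}` for all `i` makes it of size at most `p^{-γ Σ t}`. Up to the scaling
of vectors by powers of `p`, this says that the lattice attached to `y` has a vector of size
`p^{-γ Σ t}` after applying the diagonal flow at time `t`. -/
def HasShortVector (t : ι → ℕ) (γ : ℝ) (y : ι → ℚ_[p]) : Prop :=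
  ∃ v : ι → ℤ, v ≠ 0 ∧ (p : ℝ) ^ (∑ i, t i) * ‖evalForm v y‖ ≤ 1 ∧
    ∀ i, |(v i : ℝ)| * ((p : ℝ) ^ t i)⁻¹ ≤ (p : ℝ) ^ (-(γ * (∑ i, t i : ℕ)))

lemma HasShortVector.mono {t : ι → ℕ} {γ γ' : ℝ} {y : ι → ℚ_[p]} (h : HasShortVector t γ y)
    (hγ : γ' ≤ γ) : HasShortVector t γ' y := by
  obtain ⟨v, hv, hvy, hle⟩ := h
  refine ⟨v, hv, hvy, fun i => (hle i).trans ?_⟩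
  exact Real.rpow_le_rpow_of_exponent_le (one_lt_prime p).le (by gcongr)

lemma prime_pow_mul_le_one_iff {a : ℝ} {T : ℕ} :
    (p : ℝ) ^ T * a ≤ 1 ↔ a ≤ (p : ℝ) ^ (-(T : ℝ)) := by
  have hp := zero_lt_one.trans (one_lt_prime p)
  rw [Real.rpow_neg hp.le, Real.rpow_natCast, ← one_div, le_div_iff₀' (pow_pos hp T)]

lemma abs_mul_inv_le_iff {z : ℤ} {k : ℕ} {b : ℝ} :
    |(z : ℝ)| * ((p : ℝ) ^ k)⁻¹ ≤ (p : ℝ) ^ (-b) ↔ |(z : ℝ)| ≤ (p : ℝ) ^ (k - b) := by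
  have hp := zero_lt_one.trans (one_lt_prime p)
  rw [mul_inv_le_iff₀ (pow_pos hp k), ← Real.rpow_natCast, ← Real.rpow_add hp, neg_add_eq_sub]

lemma plusProd_le_of_abs_le {v : ι → ℤ} (hv : v ≠ 0) {t : ι → ℕ} {b : ℝ} (hb : 0 ≤ b)
    (h : ∀ i, |(v i : ℝ)| ≤ (p : ℝ) ^ (t i - b)) :
    plusProd v ≤ (p : ℝ) ^ ((∑ i, t i : ℕ) - b) := by
  classical
  have hp := one_lt_prime p
  obtain ⟨i₀, hi₀⟩ := Function.ne_iff.1 hv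
  have hfactor : ∀ i, max |(v i : ℝ)| 1 ≤ (p : ℝ) ^ (t i - if i = i₀ then b else 0) := by
    intro i
    split_ifs with hi
    · subst hi
      have hone : 1 ≤ |(v i : ℝ)| := by exact_mod_cast Int.one_le_abs hi₀
      exact max_le (h i) (hone.trans (h i))
    · rw [sub_zero]
      exact max_le ((h i).trans (Real.rpow_le_rpow_of_exponent_le hp.le (sub_le_self _ hb)))
        (Real.one_le_rpow hp.le (Nat.cast_nonneg _))
  calc plusProd v ≤ ∏ i, (p : ℝ) ^ (t i - if i = i₀ then b else 0) :=
        Finset.prod_le_prod (fun _ _ => by positivity) fun i _ => hfactor i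
    _ = (p : ℝ) ^ ((∑ i, t i : ℕ) - b) := by
        rw [← Real.rpow_sum_of_pos (zero_lt_one.trans hp)]
        simp

lemma mem_multApproximations_of_short {y : ι → ℚ_[p]} {v : ι → ℤ} (hv : v ≠ 0) {t : ι → ℕ}
    (hvy : (p : ℝ) ^ (∑ i, t i) * ‖evalForm v y‖ ≤ 1) {γ : ℝ} (hγ : 0 ≤ γ)
    (h : ∀ i, |(v i : ℝ)| * ((p : ℝ) ^ t i)⁻¹ ≤ (p : ℝ) ^ (-(γ * (∑ i, t i : ℕ)))) :
    v ∈ multApproximations γ y := by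
  have hp := one_lt_prime p
  set T := ∑ i, t i
  have hprod : plusProd v ≤ (p : ℝ) ^ (T - γ * T) :=
    plusProd_le_of_abs_le hv (by positivity) fun i => abs_mul_inv_le_iff.1 (h i)
  calc ‖evalForm v y‖ ≤ (p : ℝ) ^ (-(T : ℝ)) := prime_pow_mul_le_one_iff.1 hvy
    _ ≤ (p : ℝ) ^ ((T - γ * T) * -(1 + γ)) := by
        refine Real.rpow_le_rpow_of_exponent_le hp.le ?_
        nlinarith [mul_nonneg (Nat.cast_nonneg (α := ℝ) T) (sq_nonneg γ)]
    _ = ((p : ℝ) ^ (T - γ * T)) ^ (-(1 + γ)) := Real.rpow_mul (zero_lt_one.trans hp).le _ _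
    _ ≤ plusProd v ^ (-(1 + γ)) :=
        Real.rpow_le_rpow_of_nonpos (zero_lt_one.trans_le (one_le_plusProd v)) hprod (by linarith)

lemma tendsto_sum_cofinite_atTop : Tendsto (fun t : ι → ℕ => ∑ i, t i) cofinite atTop := by
  classical
  refine tendsto_atTop.2 fun N => eventually_cofinite.2 ?_
  refine (Set.finite_Iic fun _ : ι => N).subset fun t ht i => ?_
  exact (Finset.single_le_sum (fun _ _ => Nat.zero_le _) (Finset.mem_univ i)).trans
    (not_le.1 ht).le

theorem eventually_not_hasShortVector {y : ι → ℚ_[p]} {γ : ℝ} (hγ : 0 ≤ γ)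
    (h : (multApproximations γ y).Finite) :
    ∀ᶠ t : ι → ℕ in cofinite, ¬ HasShortVector t γ y := by
  have hlarge : ∀ᶠ T : ℕ in atTop, ∀ v ∈ multApproximations γ y, v ≠ 0 →
      1 < (p : ℝ) ^ T * ‖evalForm v y‖ := by
    refine (eventually_all_finite h).2 fun v _ => eventually_imp_distrib_left.2 fun hv => ?_
    exact ((tendsto_pow_atTop_atTop_of_one_lt (one_lt_prime p)).atTop_mul_const
      (norm_pos_iff.2 (evalForm_ne_zero_of_finite h hv))).eventually_gt_atTop 1
  filter_upwards [tendsto_sum_cofinite_atTop.eventually hlarge] with t ht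
  rintro ⟨v, hv, hvy, hle⟩
  exact (ht v (mem_multApproximations_of_short hv hvy hγ hle) hv).not_ge hvy

lemma exists_natCast_ge_add_mul_sum {l : ι → ℝ} (hl : ∀ i, 0 ≤ l i) {ε : ℝ} (hε : 0 < ε)
    (hlarge : 2 * (Fintype.card ι + 1) / ε < ∑ i, l i) :
    ∃ t : ι → ℕ, (∀ i, l i + ε / (2 * (Fintype.card ι + 1)) * ∑ i, l i ≤ t i) ∧
      ((∑ i, t i : ℕ) : ℝ) ≤ (∑ i, l i) * (1 + ε) := by
  set lam := ∑ i, l i with hlam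
  set m : ℝ := (Fintype.card ι : ℝ)
  have hlam0 : 0 < lam := lt_trans (by positivity) hlarge
  set δ := ε / (2 * (m + 1)) * lam with hδ
  have hδ0 : 0 < δ := by positivity
  refine ⟨fun i => ⌈l i + δ⌉₊, fun i => Nat.le_ceil _, ?_⟩
  have hsum : ((∑ i, ⌈l i + δ⌉₊ : ℕ) : ℝ) ≤ lam + m * δ + m := by
    push_cast
    refine (Finset.sum_le_sum fun i _ =>
      (Nat.ceil_lt_add_one (add_nonneg (hl i) hδ0.le)).le).trans_eq ?_
    simp [Finset.sum_add_distrib, hlam, m]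
  have hmargin : (m + 1) * δ = ε * lam / 2 := by
    have hm : m + 1 ≠ 0 := by positivity
    rw [hδ]
    field_simp
  have hround : 2 * (m + 1) < ε * lam := (div_lt_iff₀' hε).1 hlarge
  linarith

-- Writing `λ = log_p Π_+(v)`, take `t i` slightly larger than `log_p |v i|_+ + κλ`: it contracts
-- every coordinate of `v` by at least `p^{κλ}`, while `Σ t` stays between `λ` and `(1 + ε) λ`.
lemma exists_hasShortVector {y : ι → ℚ_[p]} {ε : ℝ} (hε : 0 < ε) {v : ι → ℤ}
    (hv : v ∈ multApproximations ε y)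
    (hlarge : (p : ℝ) ^ (2 * (Fintype.card ι + 1) / ε) < plusProd v) :
    ∃ t : ι → ℕ, plusProd v ≤ (p : ℝ) ^ (∑ i, t i) ∧
      HasShortVector t (ε / (2 * (Fintype.card ι + 1)) / (1 + ε)) y := by
  have hp := one_lt_prime p
  have hp0 := zero_lt_one.trans hp
  set κ := ε / (2 * (Fintype.card ι + 1))
  have : 0 < κ := by positivity
  set l : ι → ℝ := fun i => Real.logb p (max |(v i : ℝ)| 1)
  have hl0 (i : ι) : 0 ≤ l i := Real.logb_nonneg hp (le_max_right _ _)
  have hl (i : ι) : (p : ℝ) ^ l i = max |(v i : ℝ)| 1 :=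
    Real.rpow_logb hp0 hp.ne' (by positivity)
  set lam := ∑ i, l i
  have hprod : plusProd v = (p : ℝ) ^ lam := by
    rw [Real.rpow_sum_of_pos hp0]
    exact Finset.prod_congr rfl fun i _ => (hl i).symm
  have hlam : 2 * (Fintype.card ι + 1) / ε < lam :=
    (Real.rpow_lt_rpow_left_iff hp).1 (hprod ▸ hlarge)
  have hlam0 : 0 < lam := lt_trans (by positivity) hlam
  obtain ⟨t, hle, hupper⟩ := exists_natCast_ge_add_mul_sum hl0 hε hlam
  have hlower : lam ≤ (∑ i, t i : ℕ) := by
    push_cast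
    exact Finset.sum_le_sum fun i _ => (le_add_of_nonneg_right (by positivity)).trans (hle i)
  refine ⟨t, ?_, v, ?_, ?_, fun i => ?_⟩
  · rw [hprod, ← Real.rpow_natCast]
    exact Real.rpow_le_rpow_of_exponent_le hp.le hlower
  · rintro rfl
    simp [lam, l] at hlam0
  · refine prime_pow_mul_le_one_iff.2 (hv.trans ?_)
    rw [hprod, ← Real.rpow_mul hp0.le]
    exact Real.rpow_le_rpow_of_exponent_le hp.le (by linarith)
  · refine abs_mul_inv_le_iff.2 ((le_max_left _ _).trans ((hl i).symm.trans_le ?_))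
    refine Real.rpow_le_rpow_of_exponent_le hp.le ?_
    have hγ : κ / (1 + ε) * (∑ i, t i : ℕ) ≤ κ * lam := by
      rw [div_mul_eq_mul_div, div_le_iff₀ (by positivity), mul_assoc]
      gcongr
    linarith [hle i]

theorem exists_frequently_hasShortVector {y : ι → ℚ_[p]} {ε : ℝ} (hε : 0 < ε)
    (h : (multApproximations ε y).Infinite) :
    ∃ γ > 0, ∃ᶠ t : ι → ℕ in cofinite, HasShortVector t γ y := by
  refine ⟨ε / (2 * (Fintype.card ι + 1)) / (1 + ε), by positivity, ?_⟩
  rw [frequently_cofinite_iff_infinite]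
  intro hfin
  obtain ⟨N, hN⟩ := (hfin.image fun t : ι → ℕ => ∑ i, t i).bddAbove
  obtain ⟨v, hv, hvlarge⟩ := (h.sdiff (finite_setOf_plusProd_le
    (max ((p : ℝ) ^ (2 * (Fintype.card ι + 1) / ε)) ((p : ℝ) ^ N)))).nonempty
  simp only [Set.mem_ofPred_eq, not_le, max_lt_iff] at hvlarge
  obtain ⟨hlarge, hvN⟩ := hvlarge
  obtain ⟨t, hvt, ht⟩ := exists_hasShortVector hε hv hlarge
  have htN : ∑ i, t i ≤ N := hN ⟨t, ht, rfl⟩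
  exact (hvN.trans_le hvt).not_ge (pow_le_pow_right₀ (one_lt_prime p).le htN)

end MultiplicativeApproximation

section BorelCantelli

open Filter

lemma tsum_prod_fin_eq_pow {α : Type*} (f : α → ℝ≥0∞) (n : ℕ) :
    ∑' t : Fin n → α, ∏ i, f (t i) = (∑' a, f a) ^ n := by
  induction n with
  | zero => simp [tsum_fintype]
  | succ n ih =>
    rw [← (Fin.consEquiv fun _ => α).tsum_eq, ENNReal.tsum_prod', pow_succ', ← ih,
      ← ENNReal.tsum_mul_right]
    simp [Fin.consEquiv, Fin.prod_univ_succ, ENNReal.tsum_mul_left]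

lemma tsum_pow_sum_ne_top {ι : Type*} [Fintype ι] {r : ℝ≥0∞} (hr : r < 1) :
    ∑' t : ι → ℕ, r ^ ∑ i, t i ≠ ∞ := by
  have hreindex : ∑' t : ι → ℕ, r ^ ∑ i, t i =
      ∑' t : Fin (Fintype.card ι) → ℕ, ∏ i, r ^ t i := by
    rw [← ((Fintype.equivFin ι).arrowCongr (Equiv.refl ℕ)).tsum_eq]
    refine tsum_congr fun t => ?_
    rw [Finset.prod_pow_eq_pow_sum, ← (Fintype.equivFin ι).sum_comp]
    simp [Equiv.arrowCongr]
  rw [hreindex, tsum_prod_fin_eq_pow (fun k => r ^ k), ENNReal.tsum_geometric]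
  exact ENNReal.pow_ne_top (ENNReal.inv_ne_top.2 (tsub_pos_of_lt hr).ne')

lemma ae_eventually_cofinite_notMem {α ι : Type*} [MeasurableSpace α] [Countable ι]
    {μ : Measure α} {s : ι → Set α} {b : ι → ℝ≥0∞} (hb : ∑' i, b i ≠ ∞)
    (h : ∀ᶠ i in cofinite, μ (s i) ≤ b i) : ∀ᵐ x ∂μ, ∀ᶠ i in cofinite, x ∉ s i := by
  set s' : ι → Set α := fun i => {x | μ (s i) ≤ b i ∧ x ∈ s i}
  have hs' : ∑' i, μ (s' i) ≠ ∞ := by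
    refine ne_top_of_le_ne_top hb (ENNReal.tsum_le_tsum fun i => ?_)
    by_cases hi : μ (s i) ≤ b i <;> simp [s', hi]
  filter_upwards [ae_finite_setOfPred_mem hs'] with x hx
  filter_upwards [h, hx.compl_mem_cofinite] with i hi hxi hmem
  exact hxi ⟨hi, hmem⟩

end BorelCantelli

section Estimates

open Filter

lemma rpow_neg_div_four_le {g : ℝ} (hg : 0 ≤ g) (K T : ℕ) :
    (p : ℝ) ^ (-(g * T / 4)) ≤ ((p : ℝ)⁻¹ ^ ⌊g * T / (4 * (K + 1))⌋₊) ^ K := by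
  have hp := one_lt_prime p
  have hp0 := zero_lt_one.trans hp
  have hfloor : (⌊g * T / (4 * (K + 1))⌋₊ : ℝ) ≤ g * T / (4 * (K + 1)) :=
    Nat.floor_le (by positivity)
  have hexp : (⌊g * T / (4 * (K + 1))⌋₊ : ℝ) * K ≤ g * T / 4 := by
    calc _ ≤ g * T / (4 * (K + 1)) * (K + 1) := by gcongr; linarith
      _ = g * T / 4 := by field_simp
  rw [← pow_mul, inv_pow, ← Real.rpow_natCast, ← Real.rpow_neg hp0.le]
  exact Real.rpow_le_rpow_of_exponent_le hp.le (by push_cast; linarith)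

lemma eventually_rpow_neg_lt {g : ℝ} (hg : 0 < g) {m : ℕ} (hm : 0 < m) (K : ℕ) :
    ∀ᶠ T : ℕ in atTop, (p : ℝ) ^ (-(g * T)) <
      ((p : ℝ) ^ (-(g / (4 * m) * T)) / m) ^ m *
        ((p : ℝ)⁻¹ ^ ⌊g * T / (4 * (K + 1))⌋₊) ^ K / (2 * m) := by
  have hp := one_lt_prime p
  have hp0 := zero_lt_one.trans hp
  have : (0 : ℝ) < m := Nat.cast_pos.2 hm
  filter_upwards [(tendsto_pow_atTop_atTop_of_one_lt
    (Real.one_lt_rpow hp (half_pos hg))).eventually_gt_atTop ((m : ℝ) ^ m * (2 * m))] with T hT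
  have hσ : ((p : ℝ) ^ (-(g / (4 * m) * T))) ^ m = (p : ℝ) ^ (-(g * T / 4)) := by
    rw [← Real.rpow_natCast, ← Real.rpow_mul hp0.le]
    congr 1
    field_simp
  calc (p : ℝ) ^ (-(g * T))
      = (p : ℝ) ^ (-(g * T / 4)) * (p : ℝ) ^ (-(g * T / 4)) / ((p : ℝ) ^ (g / 2)) ^ T := by
        rw [← Real.rpow_natCast, ← Real.rpow_mul hp0.le, ← Real.rpow_add hp0,
          ← Real.rpow_sub hp0]
        congr 1
        ring
    _ < (p : ℝ) ^ (-(g * T / 4)) * (p : ℝ) ^ (-(g * T / 4)) / ((m : ℝ) ^ m * (2 * m)) := by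
        gcongr
    _ ≤ (p : ℝ) ^ (-(g * T / 4)) * ((p : ℝ)⁻¹ ^ ⌊g * T / (4 * (K + 1))⌋₊) ^ K /
          ((m : ℝ) ^ m * (2 * m)) := by
        gcongr
        exact rpow_neg_div_four_le hg.le K T
    _ = _ := by rw [div_pow, hσ]; field_simp

lemma inv_prime_pow_floor_le (c : ℝ) (T : ℕ) :
    (((p ^ ⌊c * T⌋₊ : ℕ) : ℝ≥0∞))⁻¹ ≤ p * ENNReal.ofReal ((p : ℝ) ^ (-c)) ^ T := by
  have hp := one_lt_prime p
  have hp0 := zero_lt_one.trans hp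
  have hreal : ((p : ℝ) ^ ⌊c * T⌋₊)⁻¹ ≤ p * ((p : ℝ) ^ (-c)) ^ T := by
    have hexp : (p : ℝ) * ((p : ℝ) ^ (-c)) ^ T = (p : ℝ) ^ (1 - c * T) := by
      rw [← Real.rpow_natCast, ← Real.rpow_mul hp0.le, sub_eq_add_neg, Real.rpow_add hp0,
        Real.rpow_one, neg_mul]
    rw [hexp, ← Real.rpow_natCast, ← Real.rpow_neg hp0.le]
    exact Real.rpow_le_rpow_of_exponent_le hp.le (by linarith [Nat.lt_floor_add_one (c * T)])
  calc (((p ^ ⌊c * T⌋₊ : ℕ) : ℝ≥0∞))⁻¹ = ENNReal.ofReal ((p : ℝ) ^ ⌊c * T⌋₊)⁻¹ := by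
        rw [ENNReal.ofReal_inv_of_pos (by positivity), ENNReal.ofReal_pow hp0.le]
        simp
    _ ≤ ENNReal.ofReal (p * ((p : ℝ) ^ (-c)) ^ T) := ENNReal.ofReal_le_ofReal hreal
    _ = p * ENNReal.ofReal ((p : ℝ) ^ (-c)) ^ T := by
        rw [ENNReal.ofReal_mul hp0.le, ENNReal.ofReal_natCast, ENNReal.ofReal_pow (by positivity)]

end Estimates

section Extremality

open Filter

variable {ι : Type*} [Fintype ι] [Nonempty ι]
variable {E : Type*} [NormedAddCommGroup E] [IsUltrametricDist E] [SecondCountableTopology E]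
  [MeasurableSpace E] [OpensMeasurableSpace E] {μ : Measure E}
  {F : E → ι → ℚ_[p]} {x₀ : E} {j₀ K : ℕ}

lemma eventually_measure_hasShortVector_le
    (hgood : ∀ v : ι → ℤ, IsDiscretelyGood p μ (fun x => evalForm v (F x)) K x₀ j₀)
    (hF : ContinuousOn F (padicBall p x₀ j₀)) {D : ℝ≥0∞}
    (hD : ∀ (x : E) (j : ℕ), μ (padicBall p x j) ≤ D * μ (padicBall p x (j + 1)))
    {g : ℝ} (hg : 0 < g)
    (hx₀ : ∀ γ > 0, ∀ᶠ t : ι → ℕ in cofinite, ¬ HasShortVector t γ (F x₀)) :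
    ∀ᶠ t : ι → ℕ in cofinite, μ {x ∈ padicBall p x₀ j₀ | HasShortVector t g (F x)} ≤
      markedConst D (Fintype.card ι + 1) * K * p * μ (padicBall p x₀ j₀) *
        ENNReal.ofReal ((p : ℝ) ^ (-(g / (4 * (K + 1))))) ^ ∑ i, t i := by
  have hp := one_lt_prime p
  have hp0 := zero_lt_one.trans hp
  have hm : 0 < Fintype.card ι := Fintype.card_pos
  set γ := g / (4 * Fintype.card ι)
  have hγ : 0 < γ := by positivity
  filter_upwards [hx₀ γ hγ, tendsto_sum_cofinite_atTop.eventually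
    (eventually_rpow_neg_lt (p := p) hg hm K)] with t ht hsmall
  set T := ∑ i, t i
  set L := ⌊g * T / (4 * (K + 1))⌋₊ with hL
  have hσ1 : (p : ℝ) ^ (-(γ * T)) ≤ 1 :=
    Real.rpow_le_one_of_one_le_of_nonpos hp.le (neg_nonpos.2 (by positivity))
  have hσx₀ : ∀ v : ι → ℤ, v ≠ 0 → (p : ℝ) ^ T * ‖evalForm v (F x₀)‖ ≤ 1 →
      ∃ i, (p : ℝ) ^ (-(γ * T)) ≤ |(v i : ℝ)| * ((p : ℝ) ^ t i)⁻¹ := by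
    intro v hv hvx
    by_contra! hlt
    exact ht ⟨v, hv, hvx, fun i => (hlt i).le⟩
  have hfloor : (((p ^ L : ℕ) : ℝ≥0∞))⁻¹ ≤
      p * ENNReal.ofReal ((p : ℝ) ^ (-(g / (4 * (K + 1))))) ^ T := by
    rw [hL, mul_div_right_comm]
    exact inv_prime_pow_floor_le _ T
  calc μ {x ∈ padicBall p x₀ j₀ | HasShortVector t g (F x)}
      ≤ markedConst D (Fintype.card ι + 1) * (K / (p ^ L : ℕ)) * μ (padicBall p x₀ j₀) := by
        refine (measure_mono ?_).trans (measure_exists_int_lt_le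
          (fun i => inv_pos.2 (pow_pos hp0 (t i))) hgood hF hD (by positivity) hσ1 hσx₀ L)
        rintro x ⟨hx, v, hv, hvx, hle⟩
        exact ⟨hx, v, hv, hvx, fun i => (hle i).trans_lt hsmall⟩
    _ ≤ markedConst D (Fintype.card ι + 1) *
          (K * (p * ENNReal.ofReal ((p : ℝ) ^ (-(g / (4 * (K + 1))))) ^ T)) *
            μ (padicBall p x₀ j₀) := by
        rw [div_eq_mul_inv]
        gcongr
    _ = _ := by ring

lemma ae_finite_multApproximations
    (hgood : ∀ v : ι → ℤ, IsDiscretelyGood p μ (fun x => evalForm v (F x)) K x₀ j₀)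
    (hF : ContinuousOn F (padicBall p x₀ j₀)) {D : ℝ≥0}
    (hD : ∀ (x : E) (j : ℕ), μ (padicBall p x j) ≤ D * μ (padicBall p x (j + 1)))
    (hfin : μ (padicBall p x₀ j₀) ≠ ∞) (hx₀ : ∀ ε > 0, (multApproximations ε (F x₀)).Finite) :
    ∀ᵐ x ∂μ, x ∈ padicBall p x₀ j₀ → ∀ ε > 0, (multApproximations ε (F x)).Finite := by
  have hevent (k : ℕ) : ∀ᵐ x ∂μ, ∀ᶠ t : ι → ℕ in cofinite,
      x ∉ {x ∈ padicBall p x₀ j₀ | HasShortVector t (1 / ((k : ℝ) + 1)) (F x)} := by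
    refine ae_eventually_cofinite_notMem ?_ (eventually_measure_hasShortVector_le hgood hF hD
      (by positivity) fun γ hγ => eventually_not_hasShortVector hγ.le (hx₀ γ hγ))
    rw [ENNReal.tsum_mul_left]
    refine ENNReal.mul_ne_top (ENNReal.mul_ne_top (ENNReal.mul_ne_top (ENNReal.mul_ne_top
      (markedConst_ne_top ENNReal.coe_ne_top _) (ENNReal.natCast_ne_top K))
      (ENNReal.natCast_ne_top p)) hfin) (tsum_pow_sum_ne_top ?_)
    exact ENNReal.ofReal_lt_one.2 (Real.rpow_lt_one_of_one_lt_of_neg (one_lt_prime p)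
      (neg_neg_of_pos (by positivity)))
  filter_upwards [ae_all_iff.2 hevent] with x hx hxball ε hε
  by_contra hinf
  obtain ⟨γ, hγ, hfreq⟩ := exists_frequently_hasShortVector hε hinf
  obtain ⟨k, hk⟩ := exists_nat_one_div_lt hγ
  exact hfreq ((hx k).mono fun t ht hshort => ht ⟨hxball, hshort.mono hk.le⟩)

end Extremality

section AnalyticMaps

variable {E : Type*} [NormedAddCommGroup E] [NormedSpace ℚ_[p] E] [ProperSpace E]
  [IsUltrametricDist E] [MeasurableSpace E] [BorelSpace E]

theorem exists_ae_finite_multApproximations {ι : Type*} [Fintype ι] [Nonempty ι]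
    {F : E → ι → ℚ_[p]} {x₀ : E}
    (hF : AnalyticAt ℚ_[p] F x₀) (hx₀ : ∀ ε > 0, (multApproximations ε (F x₀)).Finite)
    {U : Set E} (hU : U ∈ nhds x₀) :
    ∃ j, padicBall p x₀ j ⊆ U ∧ ∀ (μ : Measure E) [μ.IsAddHaarMeasure],
      ∀ᵐ x ∂μ, x ∈ padicBall p x₀ j → ∀ ε > 0, (multApproximations ε (F x)).Finite := by
  obtain ⟨j, K, hsub, hcont, hgood⟩ := exists_forall_isDiscretelyGood hF hU
  refine ⟨j, hsub, fun μ _ => ?_⟩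
  obtain ⟨D, hD⟩ := exists_measure_padicBall_le_mul_succ (p := p) μ
  have hgoodForm (v : ι → ℤ) : IsDiscretelyGood p μ (fun x => evalForm v (F x)) K x₀ j := by
    let ℓ : (ι → ℚ_[p]) →L[ℚ_[p]] ℚ_[p] :=
      ∑ i, (v i : ℚ_[p]) • ContinuousLinearMap.proj (R := ℚ_[p]) (φ := fun _ : ι => ℚ_[p]) i
    have hℓ (y : ι → ℚ_[p]) : ℓ y = evalForm v y := by simp [ℓ, evalForm]
    simpa only [hℓ] using hgood μ ℓ
  exact ae_finite_multApproximations hgoodForm hcont hD (measure_padicBall_ne_top μ x₀ j) hx₀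

theorem statement9_general {n : ℕ} {f : E → Fin n → ℚ_[p]} {x₀ : E}
    (hf : AnalyticAt ℚ_[p] f x₀) (hx₀ : ¬ IsVWMA p (f x₀)) {U : Set E} (hU : U ∈ nhds x₀) :
    ∃ j, padicBall p x₀ j ⊆ U ∧ ∀ (μ : Measure E) [μ.IsAddHaarMeasure],
      ∀ᵐ x ∂μ, x ∈ padicBall p x₀ j → ¬ IsVWMA p (f x) := by
  have hF : AnalyticAt ℚ_[p] (fun x => (Fin.cons 1 (f x) : Fin (n + 1) → ℚ_[p])) x₀ :=
    analyticAt_pi_iff.2 <| Fin.cases analyticAt_const (analyticAt_pi_iff.1 hf)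
  simp only [isVWMA_iff, not_exists, not_and, Set.not_infinite] at hx₀ ⊢
  exact exists_ae_finite_multApproximations hF hx₀ hU

end AnalyticMaps

section Charts

variable {d n : ℕ} {M : Set (Fin n → ℚ_[p])} {U U' : Set (Fin d → ℚ_[p])}
  {f : (Fin d → ℚ_[p]) → Fin n → ℚ_[p]}

theorem IsChart.mono (h : IsChart p d n M U f) (hU' : IsOpen U') (hsub : U' ⊆ U) :
    IsChart p d n M U' f := by
  obtain ⟨-, hf, hinj, hder, hhom, W₀, hW₀, hMW₀⟩ := h
  refine ⟨hU', hf.mono hsub, hinj.mono hsub, fun x hx => hder x (hsub hx), ?_, ?_⟩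
  · intro x hx V hV hxV
    obtain ⟨W, hW, hfW, hWsub⟩ := hhom x (hsub hx) (V ∩ U') (hV.inter hU') ⟨hxV, hx⟩
    refine ⟨W, hW, hfW, fun y hy => ?_⟩
    exact Set.image_mono Set.inter_subset_left (hWsub ⟨hy.1, Set.image_mono hsub hy.2⟩)
  · choose W hW hfW hWsub using fun x : U' => hhom x (hsub x.2) U' hU' x.2
    refine ⟨(⋃ x, W x) ∩ W₀, (isOpen_iUnion hW).inter hW₀, Set.Subset.antisymm ?_ ?_⟩
    · rintro y ⟨hyM, hyW, hyW₀⟩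
      obtain ⟨x, hx⟩ := Set.mem_iUnion.1 hyW
      exact Set.image_mono Set.inter_subset_left (hWsub x ⟨hx, hMW₀ ▸ ⟨hyM, hyW₀⟩⟩)
    · rintro _ ⟨x, hx, rfl⟩
      have hmem : f x ∈ M ∩ W₀ := hMW₀ ▸ Set.mem_image_of_mem f (hsub hx)
      exact ⟨hmem.1, Set.mem_iUnion.2 ⟨⟨x, hx⟩, hfW ⟨x, hx⟩⟩, hmem.2⟩

end Charts

/-- If `M ⊆ ℚ_p^n` is an analytic submanifold and some `y₀ ∈ M` is not
very well multiplicatively approximable, then almost every point in a neighbourhood of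
`y₀` in `M` (w.r.t. the smooth measure class on `M`) is not VWMA. -/
theorem statement9 (p : ℕ) [Fact p.Prime] (n d : ℕ) (hn : 1 ≤ n)
    (M : Set (Fin n → ℚ_[p])) (hM : IsAnalyticSubmanifold p d n M)
    (y₀ : Fin n → ℚ_[p]) (hy₀ : y₀ ∈ M) (hw : ¬ IsVWMA p y₀) :
    ∃ (U : Set (Fin d → ℚ_[p])) (f : (Fin d → ℚ_[p]) → (Fin n → ℚ_[p])),
      IsChart p d n M U f ∧ y₀ ∈ f '' U ∧
      ∀ (μ : Measure (Fin d → ℚ_[p])), μ.IsAddHaarMeasure →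
        ∀ᵐ x ∂μ, x ∈ U → ¬ IsVWMA p (f x) := by
  obtain ⟨U, f, hchart, x₀, hx₀, rfl⟩ := hM.2 y₀ hy₀
  obtain ⟨j, hsub, hae⟩ :=
    statement9_general (hchart.2.1 x₀ hx₀) hw (hchart.1.mem_nhds hx₀)
  exact ⟨padicBall p x₀ j, f, hchart.mono (isOpen_padicBall x₀ j) hsub,
    ⟨x₀, self_mem_padicBall x₀ j, rfl⟩, fun μ _ => hae μ⟩

end PadicDioph
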